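/- arXiv:1309.6283 — 2 statements merged into one kernel-verified Lean document; each statement's English description precedes it below -/
import Mathlib

section
/- Suppose the Ellis enveloping semigroup E(Ω,φ) is metrizable (the semicascade is ordinary). Then every ergodic sequence (T_k) of operators from the convex hull of {V^n : n ≥ 0} converges in the weak* operator topology if and only if for every ω ∈ Ω the orbit closure of ω contains exactly one minimal set. -/
open MeasureTheory Filter Topology

/-- The pairing `⟨f, μ⟩ = ∫ f dμ` of a function with a finite signed Borel measure,
defined via the Jordan decomposition of the signed measure. -/
noncomputable def spair {Ω : Type*} [MeasurableSpace Ω] (f : Ω → ℝ) (μ : SignedMeasure Ω) : ℝ :=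
  (∫ ω, f ω ∂μ.toJordanDecomposition.posPart) - (∫ ω, f ω ∂μ.toJordanDecomposition.negPart)

/-- The weak* topology on the space `X*` of finite signed Borel measures, i.e. the topology
of convergence of the pairings with all continuous functions `x ∈ C(Ω, ℝ)`. With this topology
on the codomain, the product topology on `SignedMeasure Ω → SignedMeasure Ω` is precisely the
weak* operator topology (pointwise convergence with `X*` in its weak* topology). -/
noncomputable instance weakStarTopology {Ω : Type*} [TopologicalSpace Ω] [MeasurableSpace Ω] :
    TopologicalSpace (SignedMeasure Ω) :=
  TopologicalSpace.induced (fun μ => fun x : C(Ω, ℝ) => spair (⇑x) μ) inferInstance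

/-- The operator `V : X* → X*`, pushforward by `φ`: `(Vμ)(e) = μ(φ⁻¹ e)`. -/
noncomputable def Vop {Ω : Type*} [MeasurableSpace Ω] (φ : Ω → Ω) :
    SignedMeasure Ω → SignedMeasure Ω :=
  fun μ => μ.map φ

/-- The Dirac measure at `ω`, as a signed measure. -/
noncomputable def diracSM {Ω : Type*} [MeasurableSpace Ω] (ω : Ω) : SignedMeasure Ω :=
  (Measure.dirac ω).toSignedMeasure

/-- `Γ(Ω,φ)`: the closure of `{Vⁿ : n ≥ 0}` in the weak* operator topology. -/
def GammaSG {Ω : Type*} [TopologicalSpace Ω] [MeasurableSpace Ω] (φ : Ω → Ω) :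
    Set (SignedMeasure Ω → SignedMeasure Ω) :=
  closure (Set.range fun n : ℕ => (Vop φ)^[n])

/-- `G(Ω,φ)`: the closure of the convex hull of `{Vⁿ : n ≥ 0}` in the weak* operator topology. -/
def GSG {Ω : Type*} [TopologicalSpace Ω] [MeasurableSpace Ω] (φ : Ω → Ω) :
    Set (SignedMeasure Ω → SignedMeasure Ω) :=
  closure (convexHull ℝ (Set.range fun n : ℕ => (Vop φ)^[n]))

/-- The kernel `L = {Q ∈ G(Ω,φ) : V ∘ Q = Q}` of the semigroup `G(Ω,φ)`. -/
def Lker {Ω : Type*} [TopologicalSpace Ω] [MeasurableSpace Ω] (φ : Ω → Ω) :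
    Set (SignedMeasure Ω → SignedMeasure Ω) :=
  {Q ∈ GSG φ | Vop φ ∘ Q = Q}

/-- The Ellis enveloping semigroup `E(Ω,φ)`: the closure of the iterates `{φⁿ : n ≥ 0}`
in the product topology (pointwise convergence) on `Ω → Ω`. -/
def EllisE {Ω : Type*} [TopologicalSpace Ω] (φ : Ω → Ω) : Set (Ω → Ω) :=
  closure (Set.range fun n : ℕ => φ^[n])

/-- `E_b(Ω,φ)`: the smallest set of self-maps of `Ω` containing the iterates `{φⁿ : n ≥ 0}`
and sequentially closed under pointwise convergence. -/
inductive Eb {Ω : Type*} [TopologicalSpace Ω] (φ : Ω → Ω) : (Ω → Ω) → Prop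
  | iterate (n : ℕ) : Eb φ φ^[n]
  | lim (p : ℕ → Ω → Ω) (q : Ω → Ω) (hp : ∀ k, Eb φ (p k))
      (hq : ∀ ω, Tendsto (fun k => p k ω) atTop (𝓝 (q ω))) : Eb φ q

/-- `E₁(Ω,φ)`: the set of pointwise limits of sequences of iterates `φ^{n_k}`. -/
def E1SG {Ω : Type*} [TopologicalSpace Ω] (φ : Ω → Ω) : Set (Ω → Ω) :=
  {p | ∃ n : ℕ → ℕ, ∀ ω, Tendsto (fun k => φ^[n k] ω) atTop (𝓝 (p ω))}

/-- An operator `P ∈ Γ(Ω,φ)` with `p = πP` is regular if `p` is Borel measurable and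
`(Pμ)(e) = μ(p⁻¹ e)` for every Borel probability measure `μ` and Borel set `e`. -/
def RegularOperator {Ω : Type*} [TopologicalSpace Ω] [MeasurableSpace Ω]
    (P : SignedMeasure Ω → SignedMeasure Ω) (p : Ω → Ω) : Prop :=
  Measurable p ∧ ∀ (μ : Measure Ω) [IsProbabilityMeasure μ],
    ∀ e : Set Ω, MeasurableSet e → P μ.toSignedMeasure e = (μ (p ⁻¹' e)).toReal

/-- A minimal set of the semicascade `(Ω,φ)`: a nonempty closed `φ`-invariant set containing
no proper nonempty closed `φ`-invariant subset. -/
def IsMinimalSet {Ω : Type*} [TopologicalSpace Ω] (φ : Ω → Ω) (m : Set Ω) : Prop :=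
  m.Nonempty ∧ IsClosed m ∧ Set.MapsTo φ m m ∧
    ∀ m' ⊆ m, m'.Nonempty → IsClosed m' → Set.MapsTo φ m' m' → m' = m

/-- The orbit closure of a point `ω`: the closure of the trajectory `{φⁿ ω : n ≥ 0}`. -/
def orbitClosure {Ω : Type*} [TopologicalSpace Ω] (φ : Ω → Ω) (ω : Ω) : Set Ω :=
  closure (Set.range fun n : ℕ => φ^[n] ω)

/-- A `φ`-ergodic measure: a `φ`-invariant Borel probability measure `μ` such that
`μ(e) ∈ {0,1}` for every Borel set `e` with `φ⁻¹ e = e`. -/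
def IsErgodicMeasure {Ω : Type*} [MeasurableSpace Ω] (φ : Ω → Ω) (μ : Measure Ω) : Prop :=
  IsProbabilityMeasure μ ∧ (∀ e : Set Ω, MeasurableSet e → μ (φ ⁻¹' e) = μ e) ∧
    (∀ e : Set Ω, MeasurableSet e → φ ⁻¹' e = e → μ e = 0 ∨ μ e = 1)

/-- The support of a Borel measure: the smallest closed set of full measure
(the intersection of all closed sets of full measure). -/
def msupp {Ω : Type*} [TopologicalSpace Ω] [MeasurableSpace Ω] (μ : Measure Ω) : Set Ω :=
  ⋂₀ {s : Set Ω | IsClosed s ∧ μ sᶜ = 0}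

/-- The semicascade `(Ω,φ)` is tame: for every continuous `x` and every strictly increasing
sequence `n(1) < n(2) < ⋯`, the infimum over finitely supported real coefficients `a` with
`Σ|aₖ| = 1` of the sup-norms `‖Σₖ aₖ · (x ∘ φ^{n(k)})‖` is `0`. -/
def Tame {Ω : Type*} [TopologicalSpace Ω] [CompactSpace Ω] (φ : Ω → Ω)
    (hφ : Continuous φ) : Prop :=
  ∀ (x : C(Ω, ℝ)) (n : ℕ → ℕ), StrictMono n →
    sInf {r : ℝ | ∃ a : ℕ →₀ ℝ, (∑ k ∈ a.support, |a k|) = 1 ∧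
      r = ‖∑ k ∈ a.support, a k • x.comp ⟨φ^[n k], hφ.iterate (n k)⟩‖} = 0

/-- Points `a, b` are proximal: `inf_{n ≥ 0} d(φⁿ a, φⁿ b) = 0`. -/
def Proximal {Ω : Type*} [PseudoMetricSpace Ω] (φ : Ω → Ω) (a b : Ω) : Prop :=
  (⨅ n : ℕ, dist (φ^[n] a) (φ^[n] b)) = 0


section Aux15

theorem aux_spair_sub {Ω : Type*} [MeasurableSpace Ω] (f : Ω → ℝ) (p q : Measure Ω)
    [IsFiniteMeasure p] [IsFiniteMeasure q] (hf : ∀ m : Measure Ω, IsFiniteMeasure m → Integrable f m) :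
    spair f (p.toSignedMeasure - q.toSignedMeasure) = ∫ ω, f ω ∂p - ∫ ω, f ω ∂q := by
  unfold spair
  set s := p.toSignedMeasure - q.toSignedMeasure with hs
  have h1 := s.toSignedMeasure_toJordanDecomposition
  unfold JordanDecomposition.toSignedMeasure at h1
  set a := s.toJordanDecomposition.posPart with ha
  set b := s.toJordanDecomposition.negPart with hb
  have h2 : a + q = p + b := by
    rw [← Measure.toSignedMeasure_eq_toSignedMeasure_iff, Measure.toSignedMeasure_add,
      Measure.toSignedMeasure_add]
    rw [hs, sub_eq_sub_iff_add_eq_add] at h1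
    exact h1
  have h3 : ∫ ω, f ω ∂(a + q) = ∫ ω, f ω ∂(p + b) := by rw [h2]
  rw [integral_add_measure (hf _ inferInstance) (hf _ inferInstance),
    integral_add_measure (hf _ inferInstance) (hf _ inferInstance)] at h3
  linarith

theorem aux_decomp {Ω : Type*} [MeasurableSpace Ω] (μ : SignedMeasure Ω) :
    ∃ p q : Measure Ω, ∃ (_ : IsFiniteMeasure p) (_ : IsFiniteMeasure q),
      μ = p.toSignedMeasure - q.toSignedMeasure :=
  ⟨μ.toJordanDecomposition.posPart, μ.toJordanDecomposition.negPart, inferInstance, inferInstance,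
    μ.toSignedMeasure_toJordanDecomposition.symm⟩

theorem aux_integrable {Ω : Type*} [TopologicalSpace Ω] [CompactSpace Ω]
    [MeasurableSpace Ω] [BorelSpace Ω] (x : C(Ω, ℝ)) (m : Measure Ω) (_ : IsFiniteMeasure m) :
    Integrable (⇑x) m := by
  refine Integrable.of_bound x.continuous.measurable.aestronglyMeasurable ‖x‖ ?_
  exact Eventually.of_forall fun a => x.norm_coe_le_norm a

theorem aux_spair_add {Ω : Type*} [TopologicalSpace Ω] [CompactSpace Ω]
    [MeasurableSpace Ω] [BorelSpace Ω] (x : C(Ω, ℝ)) (μ ν : SignedMeasure Ω) :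
    spair x (μ + ν) = spair x μ + spair x ν := by
  obtain ⟨p, q, _, _, rfl⟩ := aux_decomp μ
  obtain ⟨p', q', _, _, rfl⟩ := aux_decomp ν
  have hx := aux_integrable x
  have : p.toSignedMeasure - q.toSignedMeasure + (p'.toSignedMeasure - q'.toSignedMeasure)
      = (p + p').toSignedMeasure - (q + q').toSignedMeasure := by
    rw [Measure.toSignedMeasure_add, Measure.toSignedMeasure_add]; abel
  rw [this, aux_spair_sub _ _ _ hx, aux_spair_sub _ _ _ hx, aux_spair_sub _ _ _ hx,
    integral_add_measure (hx _ inferInstance) (hx _ inferInstance),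
    integral_add_measure (hx _ inferInstance) (hx _ inferInstance)]
  ring

theorem aux_spair_zero {Ω : Type*} [TopologicalSpace Ω] [CompactSpace Ω]
    [MeasurableSpace Ω] [BorelSpace Ω] (x : C(Ω, ℝ)) :
    spair x (0 : SignedMeasure Ω) = 0 := by
  have := aux_spair_add x 0 0
  simp at this
  exact this

theorem aux_spair_smul {Ω : Type*} [TopologicalSpace Ω] [CompactSpace Ω]
    [MeasurableSpace Ω] [BorelSpace Ω] (x : C(Ω, ℝ)) (c : ℝ) (hc : 0 ≤ c) (μ : SignedMeasure Ω) :
    spair x (c • μ) = c * spair x μ := by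
  obtain ⟨p, q, _, _, rfl⟩ := aux_decomp μ
  have hx := aux_integrable x
  lift c to NNReal using hc
  have : (c : ℝ) • (p.toSignedMeasure - q.toSignedMeasure)
      = (c • p).toSignedMeasure - (c • q).toSignedMeasure := by
    rw [Measure.toSignedMeasure_smul, Measure.toSignedMeasure_smul, smul_sub]; rfl
  rw [this, aux_spair_sub _ _ _ hx, aux_spair_sub _ _ _ hx, integral_smul_nnreal_measure,
    integral_smul_nnreal_measure, NNReal.smul_def, NNReal.smul_def, smul_eq_mul, smul_eq_mul]
  ring

theorem aux_spair_sum {Ω : Type*} [TopologicalSpace Ω] [CompactSpace Ω]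
    [MeasurableSpace Ω] [BorelSpace Ω] (x : C(Ω, ℝ)) {ι : Type*} (s : Finset ι) (w : ι → ℝ)
    (hw : ∀ i ∈ s, 0 ≤ w i) (μ : ι → SignedMeasure Ω) :
    spair x (∑ i ∈ s, w i • μ i) = ∑ i ∈ s, w i * spair x (μ i) := by
  classical
  induction s using Finset.induction_on with
  | empty => simpa using aux_spair_zero x
  | insert i s hi ih =>
    rw [Finset.sum_insert hi, Finset.sum_insert hi, aux_spair_add,
      aux_spair_smul _ _ (hw i (by simp)), ih fun j hj => hw j (by simp [hj])]

theorem aux_spair_map {Ω : Type*} [TopologicalSpace Ω] [CompactSpace Ω]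
    [MeasurableSpace Ω] [BorelSpace Ω] (x : C(Ω, ℝ)) (φ : C(Ω, Ω)) (μ : SignedMeasure Ω) :
    spair x (Vop φ μ) = spair (x.comp φ) μ := by
  obtain ⟨p, q, _, _, rfl⟩ := aux_decomp μ
  have hm : Measurable φ := φ.continuous.measurable
  have : Vop φ (p.toSignedMeasure - q.toSignedMeasure)
      = (p.map φ).toSignedMeasure - (q.map φ).toSignedMeasure := by
    ext e he
    unfold Vop
    rw [VectorMeasure.map_apply _ hm he, Measure.toSignedMeasure_sub_apply (hm he),
      Measure.toSignedMeasure_sub_apply he, map_measureReal_apply hm he, map_measureReal_apply hm he]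
  rw [this, aux_spair_sub _ _ _ (aux_integrable x), aux_spair_sub _ _ _ (aux_integrable (x.comp φ)),
    integral_map hm.aemeasurable (aux_integrable x _ inferInstance).aestronglyMeasurable,
    integral_map hm.aemeasurable (aux_integrable x _ inferInstance).aestronglyMeasurable]
  rfl

theorem aux_spair_iter {Ω : Type*} [TopologicalSpace Ω] [CompactSpace Ω]
    [MeasurableSpace Ω] [BorelSpace Ω] (φ : C(Ω, Ω)) (n : ℕ) (x : C(Ω, ℝ)) (μ : SignedMeasure Ω) :
    spair x ((Vop φ)^[n] μ) = spair (fun ω => x (φ^[n] ω)) μ := by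
  induction n generalizing μ with
  | zero => rfl
  | succ n ih =>
    rw [Function.iterate_succ_apply, ih]
    exact aux_spair_map (x.comp ⟨φ^[n], φ.continuous.iterate n⟩) φ μ

theorem aux_spair_dirac {Ω : Type*} [TopologicalSpace Ω] [CompactSpace Ω]
    [MeasurableSpace Ω] [BorelSpace Ω] (x : C(Ω, ℝ)) (ω : Ω) :
    spair x (diracSM ω) = x ω := by
  have := aux_spair_sub x (Measure.dirac ω) 0 (aux_integrable x)
  rw [Measure.toSignedMeasure_zero, sub_zero] at this
  unfold diracSM
  rw [this, integral_dirac' _ _ x.continuous.measurable.stronglyMeasurable]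
  simp

theorem aux_Vdirac {Ω : Type*} [MeasurableSpace Ω] (φ : Ω → Ω) (hφ : Measurable φ) (ω : Ω) :
    Vop φ (diracSM ω) = diracSM (φ ω) := by
  ext e he
  unfold Vop diracSM
  rw [VectorMeasure.map_apply _ hφ he, Measure.toSignedMeasure_apply_measurable (hφ he),
    Measure.toSignedMeasure_apply_measurable he, ← map_measureReal_apply hφ he,
    Measure.map_dirac' hφ]

/-- Riesz representation on a compact space. -/
theorem aux_riesz {Ω : Type*} [TopologicalSpace Ω] [CompactSpace Ω] [T2Space Ω]
    [MeasurableSpace Ω] [BorelSpace Ω] (L : C(Ω, ℝ) → ℝ)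
    (hadd : ∀ x y, L (x + y) = L x + L y) (hsmul : ∀ (c : ℝ) x, L (c • x) = c * L x)
    (hpos : ∀ x : C(Ω, ℝ), (∀ ω, 0 ≤ x ω) → 0 ≤ L x) :
    ∃ ν : Measure Ω, ∃ _ : IsFiniteMeasure ν, ∀ x : C(Ω, ℝ), ∫ ω, x ω ∂ν = L x := by
  let Λ : CompactlySupportedContinuousMap Ω ℝ →ₚ[ℝ] ℝ :=
  { toFun g := L g.toContinuousMap
    map_add' g g' := hadd _ _
    map_smul' c g := hsmul _ _
    monotone' g g' hgg' := by
      have h1 : L (g'.toContinuousMap + (-1 : ℝ) • g.toContinuousMap) = _ := hadd _ _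
      rw [hsmul] at h1
      have h2 : 0 ≤ L (g'.toContinuousMap + (-1 : ℝ) • g.toContinuousMap) := by
        apply hpos
        intro ω
        have : g ω ≤ g' ω := hgg' ω
        simp
        exact this
      show L g.toContinuousMap ≤ L g'.toContinuousMap
      linarith }
  refine ⟨RealRMK.rieszMeasure Λ, inferInstance, fun x => ?_⟩
  exact RealRMK.integral_rieszMeasure Λ
    { toContinuousMap := x, hasCompactSupport' := HasCompactSupport.of_compactSpace _ }

/-- Averaging operators on `C(Ω)`: abstract properties of convex combinations of compositions. -/
structure AuxAvg {Ω : Type*} [TopologicalSpace Ω] (φ : C(Ω, Ω)) (A : C(Ω, ℝ) → C(Ω, ℝ)) :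
    Prop where
  add : ∀ x y, A (x + y) = A x + A y
  smul : ∀ (c : ℝ) x, A (c • x) = c • A x
  comm : ∀ x, A (x.comp φ) = (A x).comp φ
  const : ∀ x ω c, (∀ n, x (φ^[n] ω) = c) → A x ω = c
  bound : ∀ x ω c, (∀ n, |x (φ^[n] ω)| ≤ c) → |A x ω| ≤ c
  nonneg : ∀ x ω, (∀ n, 0 ≤ x (φ^[n] ω)) → 0 ≤ A x ω

theorem aux_avg {Ω : Type*} [TopologicalSpace Ω] (φ : C(Ω, Ω)) {ι : Type*} [Fintype ι]
    (w : ι → ℝ) (hw : ∀ i, 0 ≤ w i) (hw1 : ∑ i, w i = 1) (n : ι → ℕ) :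
    AuxAvg φ (fun x => ∑ i, w i • x.comp ⟨φ^[n i], φ.continuous.iterate (n i)⟩) where
  add x y := by
    ext ω; simp [Finset.sum_add_distrib]
  smul c x := by
    ext ω; simp only [ContinuousMap.smul_comp, ContinuousMap.coe_sum, ContinuousMap.coe_smul, ContinuousMap.coe_comp,
      ContinuousMap.coe_mk, Finset.sum_apply, Pi.smul_apply, Function.comp_apply, smul_eq_mul, Finset.mul_sum]
    exact Finset.sum_congr rfl fun i _ => by ring
  comm x := by
    ext ω
    simp only [ContinuousMap.coe_sum, ContinuousMap.coe_smul, ContinuousMap.coe_comp,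
      ContinuousMap.coe_mk, Finset.sum_apply, Pi.smul_apply, Function.comp_apply]
    exact Finset.sum_congr rfl fun i _ => by
      rw [← Function.iterate_succ_apply φ, ← Function.iterate_succ_apply' φ]
  const x ω c h := by
    simp [h, ← Finset.sum_mul, hw1]
  bound x ω c h := by
    simp only [ContinuousMap.coe_sum, ContinuousMap.coe_smul, ContinuousMap.coe_comp,
      ContinuousMap.coe_mk, Finset.sum_apply, Pi.smul_apply, Function.comp_apply, smul_eq_mul]
    calc _ ≤ ∑ i, |w i * x (φ^[n i] ω)| := Finset.abs_sum_le_sum_abs _ _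
      _ ≤ ∑ i, w i * c := by
        refine Finset.sum_le_sum fun i _ => ?_
        rw [abs_mul, abs_of_nonneg (hw i)]
        exact mul_le_mul_of_nonneg_left (h _) (hw i)
      _ = c := by rw [← Finset.sum_mul, hw1, one_mul]
  nonneg x ω h := by
    simp only [ContinuousMap.coe_sum, ContinuousMap.coe_smul, ContinuousMap.coe_comp,
      ContinuousMap.coe_mk, Finset.sum_apply, Pi.smul_apply, Function.comp_apply, smul_eq_mul]
    exact Finset.sum_nonneg fun i _ => mul_nonneg (hw i) (h _)

theorem aux_spair_comb {Ω : Type*} [TopologicalSpace Ω] [CompactSpace Ω]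
    [MeasurableSpace Ω] [BorelSpace Ω] (φ : C(Ω, Ω)) {ι : Type*} [Fintype ι]
    (w : ι → ℝ) (hw : ∀ i, 0 ≤ w i) (n : ι → ℕ) (x : C(Ω, ℝ)) (μ : SignedMeasure Ω) :
    spair x ((∑ i, w i • (Vop φ)^[n i]) μ) =
      spair (∑ i, w i • x.comp ⟨φ^[n i], φ.continuous.iterate (n i)⟩ : C(Ω, ℝ)) μ := by
  have e : (∑ i, w i • (Vop φ)^[n i]) μ = ∑ i, w i • ((Vop φ)^[n i] μ) := by
    simp [Finset.sum_apply]
  rw [e, aux_spair_sum _ _ _ fun i _ => hw i]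
  simp_rw [aux_spair_iter]
  have hi : ∀ (m : Measure Ω) (_ : IsFiniteMeasure m) i,
      Integrable (fun ω => w i * x (φ^[n i] ω)) m :=
    fun m hm i => (aux_integrable (x.comp ⟨φ^[n i], φ.continuous.iterate _⟩) m hm).const_mul _
  have e2 : ((∑ i, w i • x.comp ⟨φ^[n i], φ.continuous.iterate (n i)⟩ : C(Ω, ℝ)) : Ω → ℝ)
      = fun ω => ∑ i, w i * x (φ^[n i] ω) := by
    ext ω; simp
  rw [e2]
  unfold spair
  rw [integral_finsetSum _ fun i _ => hi _ inferInstance i,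
    integral_finsetSum _ fun i _ => hi _ inferInstance i, ← Finset.sum_sub_distrib]
  refine Finset.sum_congr rfl fun i _ => ?_
  rw [integral_const_mul, integral_const_mul]; ring

theorem aux_hull {Ω : Type*} [TopologicalSpace Ω] [CompactSpace Ω]
    [MeasurableSpace Ω] [BorelSpace Ω] (φ : C(Ω, Ω)) (T : SignedMeasure Ω → SignedMeasure Ω)
    (hT : T ∈ convexHull ℝ (Set.range fun n : ℕ => (Vop φ)^[n])) :
    ∃ A : C(Ω, ℝ) → C(Ω, ℝ), AuxAvg φ A ∧
      ∀ (x : C(Ω, ℝ)) (μ : SignedMeasure Ω), spair x (T μ) = spair (A x) μ := by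
  obtain ⟨ι, _, w, z, hw, hw1, hz, rfl⟩ := mem_convexHull_iff_exists_fintype.1 hT
  choose n hn using hz
  refine ⟨_, aux_avg φ w hw hw1 n, fun x μ => ?_⟩
  rw [← aux_spair_comb φ w hw n x μ]
  have : z = fun i => (Vop φ)^[n i] := funext fun i => (hn i).symm
  rw [this]

/-- Separability of the sup-orbit metric for an ordinary semicascade. -/
theorem aux_cover {Ω : Type*} [MetricSpace Ω] [CompactSpace Ω] [Nonempty Ω] (φ : C(Ω, Ω))
    (hmet : TopologicalSpace.MetrizableSpace (EllisE φ)) (ε : ℝ) (hε : 0 < ε) :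
    ∃ B : ℕ → Set Ω, (∀ i, IsClosed (B i)) ∧ (∀ ω, ∃ i, ω ∈ B i) ∧
      ∀ i, ∀ a ∈ B i, ∀ b ∈ B i, ∀ n, dist (φ^[n] a) (φ^[n] b) ≤ ε := by
  have hc : CompactSpace (EllisE φ) := isCompact_iff_compactSpace.1 isClosed_closure.isCompact
  let _ := TopologicalSpace.metrizableSpaceMetric (EllisE φ)
  have : Nonempty C(EllisE φ, Ω) := ⟨ContinuousMap.const _ (Classical.arbitrary Ω)⟩
  let e : ℕ → EllisE φ := fun n => ⟨φ^[n], subset_closure ⟨n, rfl⟩⟩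
  let F : Ω → C(EllisE φ, Ω) := fun ω =>
    ⟨fun p => p.1 ω, (continuous_apply ω).comp continuous_subtype_val⟩
  let d := TopologicalSpace.denseSeq C(EllisE φ, Ω)
  refine ⟨fun i => ⋂ n, {ω | dist (φ^[n] ω) (d i (e n)) ≤ ε / 2}, fun i => ?_, fun ω => ?_, ?_⟩
  · exact isClosed_iInter fun n =>
      isClosed_le ((φ.continuous.iterate n).dist continuous_const) continuous_const
  · obtain ⟨i, hi⟩ := (TopologicalSpace.denseRange_denseSeq C(EllisE φ, Ω)).exists_dist_lt (F ω)
      (half_pos hε)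
    refine ⟨i, Set.mem_iInter.2 fun n => ?_⟩
    exact (ContinuousMap.dist_apply_le_dist (e n)).trans hi.le
  · intro i a ha b hb n
    have h1 := Set.mem_iInter.1 ha n
    have h2 := Set.mem_iInter.1 hb n
    simp only [Set.mem_ofPred_eq] at h1 h2
    have := dist_triangle_right (φ^[n] a) (φ^[n] b) (d i (e n))
    linarith

theorem aux_oc_closed {Ω : Type*} [TopologicalSpace Ω] (φ : C(Ω, Ω)) (ω : Ω) :
    IsClosed (orbitClosure φ ω) := isClosed_closure

theorem aux_oc_self {Ω : Type*} [TopologicalSpace Ω] (φ : C(Ω, Ω)) (ω : Ω) (n : ℕ) :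
    φ^[n] ω ∈ orbitClosure φ ω := subset_closure ⟨n, rfl⟩

theorem aux_oc_maps {Ω : Type*} [TopologicalSpace Ω] (φ : C(Ω, Ω)) (ω : Ω) :
    Set.MapsTo φ (orbitClosure φ ω) (orbitClosure φ ω) := by
  refine Set.MapsTo.closure ?_ φ.continuous
  rintro _ ⟨n, rfl⟩
  exact ⟨n + 1, Function.iterate_succ_apply' φ n ω⟩

theorem aux_oc_sub {Ω : Type*} [TopologicalSpace Ω] (φ : C(Ω, Ω)) (m : Set Ω) (hm : IsClosed m)
    (hinv : Set.MapsTo φ m m) (ω : Ω) (hω : ω ∈ m) : orbitClosure φ ω ⊆ m := by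
  refine closure_minimal ?_ hm
  rintro _ ⟨n, rfl⟩
  exact hinv.iterate n hω

/-- Following a point of the orbit closure for a finite time. -/
theorem aux_shadow {Ω : Type*} [MetricSpace Ω] (φ : C(Ω, Ω)) (ω y : Ω)
    (hy : y ∈ orbitClosure φ ω) (N : ℕ) (ε : ℝ) (hε : 0 < ε) :
    ∃ n, ∀ j ≤ N, dist (φ^[n + j] ω) (φ^[j] y) < ε := by
  have hU : IsOpen (⋂ j ∈ Finset.range (N + 1), {z | dist (φ^[j] z) (φ^[j] y) < ε}) :=
    isOpen_biInter_finset fun j _ =>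
      isOpen_lt ((φ.continuous.iterate j).dist continuous_const) continuous_const
  obtain ⟨_, hz, n, rfl⟩ := mem_closure_iff.1 hy _ hU (by simp [hε])
  refine ⟨n, fun j hj => ?_⟩
  have := Set.mem_iInter₂.1 hz j (by simp; omega)
  simp only [Set.mem_ofPred_eq] at this
  rwa [← Function.iterate_add_apply, add_comm] at this

theorem aux_null_piece {Ω : Type*} [MetricSpace Ω] [CompactSpace Ω] [MeasurableSpace Ω]
    [BorelSpace Ω] (φ : C(Ω, Ω)) (ν : Measure Ω) [IsFiniteMeasure ν]
    (hν : MeasurePreserving φ ν ν) (m : Set Ω) (hinv : Set.MapsTo φ m m)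
    (ε : ℝ) (hε : 0 < ε) (B : Set Ω) (hBc : IsClosed B)
    (hB : ∀ a ∈ B, ∀ b ∈ B, ∀ n, dist (φ^[n] a) (φ^[n] b) ≤ ε)
    (ω : Ω) (hω : ω ∈ B) (y : Ω) (hym : y ∈ m) (hy : y ∈ orbitClosure φ ω)
    (hd : 3 * ε < Metric.infDist ω m) : ν B = 0 := by
  by_contra hne
  choose n hn using fun N => aux_shadow φ ω y hy N ε hε
  have bad : ∀ N, ∀ j ≤ N, ∀ u ∈ B, φ^[n N + j] u ∉ B := by
    intro N j hj u hu hu'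
    have h1 := hn N j hj
    have h2 := hB u hu ω hω (n N + j)
    have h3 := hB _ hu' ω hω 0
    simp only [Function.iterate_zero, id] at h3
    have h4 : Metric.infDist ω m ≤ dist ω (φ^[j] y) :=
      Metric.infDist_le_dist_of_mem (hinv.iterate j hym)
    have h5 := dist_triangle4 ω (φ^[n N + j] u) (φ^[n N + j] ω) (φ^[j] y)
    rw [dist_comm] at h3
    linarith
  let a : ℕ → ℕ := fun k => Nat.rec 0 (fun _ p => n p + p) k
  have ha : ∀ k, a (k + 1) = n (a k) + a k := fun k => rfl
  have hmono : Monotone a := monotone_nat_of_le_succ fun k => by rw [ha]; omega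
  have hdis : ∀ i j, i < j → Disjoint (φ^[a i] ⁻¹' B) (φ^[a j] ⁻¹' B) := by
    intro i j hij
    obtain ⟨k, rfl⟩ : ∃ k, j = k + 1 := ⟨j - 1, by omega⟩
    rw [Set.disjoint_left]
    intro z hz hz'
    have hik : a i ≤ a k := hmono (by omega)
    apply bad (a k) (a k - a i) (by omega) _ hz
    rw [← Function.iterate_add_apply]
    have : n (a k) + (a k - a i) + a i = a (k + 1) := by rw [ha]; omega
    rw [this]
    exact hz'
  have hfin := Measure.finite_const_le_meas_of_disjoint_iUnion ν (ε := ν B)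
    (pos_iff_ne_zero.2 hne) (As := fun k => φ^[a k] ⁻¹' B)
    (fun k => (φ.continuous.iterate _).measurable hBc.measurableSet)
    (fun i j hij => by
      rcases lt_or_gt_of_ne hij with h | h
      · exact hdis i j h
      · exact (hdis j i h).symm) (measure_ne_top _ _)
  have : {k | ν B ≤ ν (φ^[a k] ⁻¹' B)} = Set.univ := by
    ext k
    simp [(hν.iterate (a k)).measure_preimage hBc.measurableSet.nullMeasurableSet]
  rw [this] at hfin
  exact Set.infinite_univ hfin

theorem aux_null {Ω : Type*} [MetricSpace Ω] [CompactSpace Ω] [Nonempty Ω] [MeasurableSpace Ω]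
    [BorelSpace Ω] (φ : C(Ω, Ω)) (hmet : TopologicalSpace.MetrizableSpace (EllisE φ))
    (ν : Measure Ω) [IsFiniteMeasure ν]
    (hν : MeasurePreserving φ ν ν) (m : Set Ω) (hmc : IsClosed m) (hmn : m.Nonempty)
    (hinv : Set.MapsTo φ m m)
    (F : Set Ω) (hF : ∀ᵐ ω ∂ν, ω ∈ F) (hFm : ∀ ω ∈ F, ∃ y ∈ m, y ∈ orbitClosure φ ω) :
    ∀ᵐ ω ∂ν, ω ∈ m := by
  have key : ∀ k : ℕ, ∀ᵐ ω ∂ν, Metric.infDist ω m ≤ 3 * (1 / ((k : ℝ) + 1)) := by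
    intro k
    have hε : (0 : ℝ) < 1 / ((k : ℝ) + 1) := by positivity
    obtain ⟨B, hBc, hcov, hB⟩ := aux_cover φ hmet _ hε
    have : ∀ i, ∀ᵐ ω ∂ν, ω ∈ F → ω ∈ B i → Metric.infDist ω m ≤ 3 * (1 / ((k : ℝ) + 1)) := by
      intro i
      by_cases h : ν (B i) = 0
      · have : ∀ᵐ ω ∂ν, ω ∉ B i := measure_eq_zero_iff_ae_notMem.1 h
        filter_upwards [this] with ω h1 _ h2 using absurd h2 h1
      · refine Eventually.of_forall fun ω hω hωB => ?_
        by_contra hlt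
        obtain ⟨y, hym, hy⟩ := hFm ω hω
        exact h (aux_null_piece φ ν hν m hinv _ hε (B i) (hBc i) (hB i) ω hωB y hym hy
          (not_le.1 hlt))
    filter_upwards [ae_all_iff.2 this, hF] with ω h1 h2
    obtain ⟨i, hi⟩ := hcov ω
    exact h1 i h2 hi
  filter_upwards [ae_all_iff.2 key] with ω h
  rw [hmc.mem_iff_infDist_zero hmn]
  refine le_antisymm (ge_of_tendsto' (x := atTop) ?_ h) Metric.infDist_nonneg
  simpa using (tendsto_one_div_add_atTop_nhds_zero_nat (𝕜 := ℝ)).const_mul 3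

theorem aux_min_oc {Ω : Type*} [TopologicalSpace Ω] (φ : C(Ω, Ω)) (m : Set Ω)
    (hm : IsMinimalSet φ m) (ω : Ω) (hω : ω ∈ m) : orbitClosure φ ω = m :=
  hm.2.2.2 _ (aux_oc_sub φ m hm.2.1 hm.2.2.1 ω hω) ⟨ω, aux_oc_self φ ω 0⟩ (aux_oc_closed φ ω)
    (aux_oc_maps φ ω)

theorem aux_close {Ω : Type*} [MetricSpace Ω] [CompactSpace Ω] [Nonempty Ω]
    (φ : C(Ω, Ω)) (hmet : TopologicalSpace.MetrizableSpace (EllisE φ)) (m : Set Ω)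
    (hm : IsMinimalSet φ m) (a b : Ω) (ha : a ∈ m) (hb : b ∈ m) (ε : ℝ) (hε : 0 < ε) :
    ∃ p q : ℕ, ∀ n, dist (φ^[n] (φ^[p] a)) (φ^[n] (φ^[q] b)) ≤ ε := by
  obtain ⟨B, hBc, hcov, hB⟩ := aux_cover φ hmet _ hε
  have : CompactSpace m := isCompact_iff_compactSpace.1 hm.2.1.isCompact
  have : Nonempty m := hm.1.to_subtype
  obtain ⟨i, z, hz⟩ := nonempty_interior_of_iUnion_of_closed
    (f := fun i => ((↑) : m → Ω) ⁻¹' B i) (fun i => (hBc i).preimage continuous_subtype_val)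
    (Set.eq_univ_of_forall fun ω => Set.mem_iUnion.2 (hcov ω))
  obtain ⟨O, hO, hOe⟩ := isOpen_induced_iff.1 (isOpen_interior (s := ((↑) : m → Ω) ⁻¹' B i))
  have hzO : (z : Ω) ∈ O := by rw [← hOe] at hz; exact hz
  have hit : ∀ c ∈ m, ∃ p, φ^[p] c ∈ B i := by
    intro c hc
    have : (z : Ω) ∈ orbitClosure φ c := by rw [aux_min_oc φ m hm c hc]; exact z.2
    obtain ⟨_, hw, p, rfl⟩ := mem_closure_iff.1 this O hO hzO
    have hpm : φ^[p] c ∈ m := hm.2.2.1.iterate p hc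
    have : (⟨φ^[p] c, hpm⟩ : m) ∈ interior (((↑) : m → Ω) ⁻¹' B i) := by rw [← hOe]; exact hw
    have h2 := interior_subset this
    exact ⟨p, h2⟩
  obtain ⟨p, hp⟩ := hit a ha
  obtain ⟨q, hq⟩ := hit b hb
  exact ⟨p, q, hB i _ hp _ hq⟩

theorem aux_birk {Ω : Type*} [MetricSpace Ω] [CompactSpace Ω] [Nonempty Ω]
    (φ : C(Ω, Ω)) (hmet : TopologicalSpace.MetrizableSpace (EllisE φ)) (m : Set Ω)
    (hm : IsMinimalSet φ m) (a b : Ω) (ha : a ∈ m) (hb : b ∈ m) (x : C(Ω, ℝ)) :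
    Tendsto (fun N => birkhoffAverage ℝ φ x N a - birkhoffAverage ℝ φ x N b) atTop (𝓝 0) := by
  have hbd : Bornology.IsBounded (Set.range x) := (isCompact_range x.continuous).isBounded
  have hsh : ∀ p c, Tendsto (fun N => birkhoffAverage ℝ φ x N (φ^[p] c) -
      birkhoffAverage ℝ φ x N c) atTop (𝓝 0) := by
    intro p c
    induction p with
    | zero => simp
    | succ p ih =>
      have := (tendsto_birkhoffAverage_apply_sub_birkhoffAverage' ℝ hbd φ (φ^[p] c)).add ih
      simp only [sub_add_sub_cancel, add_zero] at this
      simpa only [Function.iterate_succ_apply'] using this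
  rw [Metric.tendsto_atTop]
  intro ε hε
  obtain ⟨δ, hδ, hx⟩ := Metric.uniformContinuous_iff.1
    (CompactSpace.uniformContinuous_of_continuous x.continuous) (ε / 4) (by positivity)
  obtain ⟨p, q, hpq⟩ := aux_close φ hmet m hm a b ha hb (δ / 2) (by positivity)
  obtain ⟨N1, h1⟩ := Metric.tendsto_atTop.1 (hsh p a) (ε / 4) (by positivity)
  obtain ⟨N2, h2⟩ := Metric.tendsto_atTop.1 (hsh q b) (ε / 4) (by positivity)
  refine ⟨max N1 N2, fun N hN => ?_⟩
  have h1 := h1 N (le_trans (le_max_left _ _) hN)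
  have h2 := h2 N (le_trans (le_max_right _ _) hN)
  have h3 : dist (birkhoffAverage ℝ φ x N (φ^[p] a)) (birkhoffAverage ℝ φ x N (φ^[q] b))
      ≤ ε / 4 := by
    refine (dist_birkhoffAverage_birkhoffAverage_le ℝ _ _ _ _ _).trans ?_
    have : ∑ k ∈ Finset.range N, dist (x (φ^[k] (φ^[p] a))) (x (φ^[k] (φ^[q] b)))
        ≤ ∑ k ∈ Finset.range N, ε / 4 :=
      Finset.sum_le_sum fun k _ => (hx (lt_of_le_of_lt (hpq k) (by linarith))).le
    rw [Finset.sum_const, Finset.card_range, nsmul_eq_mul] at this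
    exact div_le_of_le_mul₀ (by positivity) (by positivity) (by linarith)
  rw [Real.dist_eq, abs_lt] at *
  rw [abs_le] at h3
  constructor <;> linarith [h1.1, h1.2, h2.1, h2.2, h3.1, h3.2]

theorem aux_unique {Ω : Type*} [MetricSpace Ω] [CompactSpace Ω] [Nonempty Ω] [MeasurableSpace Ω]
    [BorelSpace Ω] (φ : C(Ω, Ω)) (hmet : TopologicalSpace.MetrizableSpace (EllisE φ)) (m : Set Ω)
    (hm : IsMinimalSet φ m) (b : Ω) (hb : b ∈ m) (x : C(Ω, ℝ))
    (ν : Measure Ω) [IsProbabilityMeasure ν] (hν : MeasurePreserving φ ν ν)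
    (hνm : ∀ᵐ ω ∂ν, ω ∈ m) :
    Tendsto (fun N => birkhoffAverage ℝ φ x N b) atTop (𝓝 (∫ ω, x ω ∂ν)) := by
  have hcont : ∀ N, Continuous (birkhoffAverage ℝ φ x N) := by
    intro N
    unfold birkhoffAverage birkhoffSum
    have : Continuous fun ω => ∑ k ∈ Finset.range N, x (φ^[k] ω) :=
      continuous_finsetSum _ fun k _ => x.continuous.comp (φ.continuous.iterate k)
    exact this.const_smul ((N : ℝ)⁻¹)
  have hbd : ∀ N ω, ‖birkhoffAverage ℝ φ x N ω‖ ≤ ‖x‖ := by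
    intro N ω
    unfold birkhoffAverage birkhoffSum
    rw [norm_smul, norm_inv, RCLike.norm_natCast]
    have : ‖∑ k ∈ Finset.range N, x (φ^[k] ω)‖ ≤ ∑ k ∈ Finset.range N, ‖x‖ :=
      norm_sum_le_of_le _ fun k _ => x.norm_coe_le_norm _
    rw [Finset.sum_const, Finset.card_range, nsmul_eq_mul] at this
    rw [← div_eq_inv_mul]
    exact div_le_of_le_mul₀ (by positivity) (by positivity) (by linarith)
  have hint : ∀ N, Integrable (birkhoffAverage ℝ φ x N) ν := fun N =>
    aux_integrable ⟨_, hcont N⟩ ν inferInstance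
  have h1 : Tendsto (fun N => ∫ ω, (birkhoffAverage ℝ φ x N ω - birkhoffAverage ℝ φ x N b) ∂ν)
      atTop (𝓝 (∫ _, (0 : ℝ) ∂ν)) := by
    refine tendsto_integral_of_dominated_convergence (fun _ => ‖x‖ + ‖x‖) (fun N => ?_)
      (integrable_const _) (fun N => ?_) ?_
    · exact ((hint N).sub (integrable_const _)).aestronglyMeasurable
    · exact Eventually.of_forall fun ω => norm_sub_le_of_le (hbd N ω) (hbd N b)
    · filter_upwards [hνm] with ω hω using aux_birk φ hmet m hm ω b hω hb x
  have h2 : ∀ N, 0 < N → ∫ ω, birkhoffAverage ℝ φ x N ω ∂ν = ∫ ω, x ω ∂ν := by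
    intro N hN
    have hk : ∀ k, ∫ ω, x (φ^[k] ω) ∂ν = ∫ ω, x ω ∂ν := by
      intro k
      have := (hν.iterate k).map_eq
      conv_rhs => rw [← this]
      rw [integral_map (φ.continuous.iterate k).measurable.aemeasurable
        x.continuous.measurable.aestronglyMeasurable]
    unfold birkhoffAverage birkhoffSum
    have hki : ∀ k, Integrable (fun ω => x (φ^[k] ω)) ν := fun k =>
      aux_integrable (x.comp ⟨φ^[k], φ.continuous.iterate k⟩) ν inferInstance
    rw [integral_smul, integral_finsetSum _ fun k _ => hki k]
    simp_rw [hk]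
    simp
    field_simp
  have h3 : Tendsto (fun N => ∫ ω, x ω ∂ν - birkhoffAverage ℝ φ x N b) atTop (𝓝 0) := by
    simp only [integral_zero] at h1
    refine h1.congr' ?_
    filter_upwards [eventually_gt_atTop 0] with N hN
    rw [integral_sub (hint N) (integrable_const _), h2 N hN]
    simp
  have := h3.const_sub (∫ ω, x ω ∂ν)
  simpa using this

theorem aux_cluster {Ω : Type*} [MetricSpace Ω] [CompactSpace Ω] [MeasurableSpace Ω]
    [BorelSpace Ω] (φ : C(Ω, Ω)) (A : ℕ → C(Ω, ℝ) → C(Ω, ℝ)) (hA : ∀ k, AuxAvg φ (A k))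
    (herg : ∀ x ω, Tendsto (fun k => A k x ω - A k x (φ ω)) atTop (𝓝 0)) (ω : Ω)
    (U : Ultrafilter ℕ) (hU : (U : Filter ℕ) ≤ atTop) :
    ∃ ν : Measure Ω, IsProbabilityMeasure ν ∧ MeasurePreserving φ ν ν ∧
      (∀ᵐ z ∂ν, z ∈ orbitClosure φ ω) ∧
      ∀ x : C(Ω, ℝ), Tendsto (fun k => A k x ω) U (𝓝 (∫ z, x z ∂ν)) := by
  have hlim : ∀ x : C(Ω, ℝ), ∃ l : ℝ, Tendsto (fun k => A k x ω) U (𝓝 l) := by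
    intro x
    have hmem : ∀ k, A k x ω ∈ Set.Icc (-‖x‖) ‖x‖ := fun k =>
      abs_le.1 ((hA k).bound x ω _ fun n => x.norm_coe_le_norm _)
    obtain ⟨l, -, hl⟩ := isCompact_Icc.ultrafilter_le_nhds' (U.map fun k => A k x ω)
      (Filter.mem_map.2 (Filter.univ_mem' hmem))
    exact ⟨l, hl⟩
  choose L hL using hlim
  obtain ⟨ν, hfin, hν⟩ := aux_riesz L
    (fun x y => tendsto_nhds_unique (hL (x + y)) (((hL x).add (hL y)).congr fun k => by
      rw [(hA k).add]; rfl))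
    (fun c x => tendsto_nhds_unique (hL (c • x)) (((hL x).const_mul c).congr fun k => by
      rw [(hA k).smul]; rfl))
    (fun x hx => ge_of_tendsto' (hL x) fun k => (hA k).nonneg x ω fun n => hx _)
  have hcst : ∀ x c, (∀ n, x (φ^[n] ω) = c) → L x = c := fun x c h =>
    tendsto_nhds_unique (hL x) (tendsto_const_nhds.congr fun k => ((hA k).const x ω c h).symm)
  refine ⟨ν, ?_, ?_, ?_, fun x => by rw [hν]; exact hL x⟩
  · have h1 := hν 1
    rw [hcst 1 1 fun n => rfl] at h1
    simp at h1
    exact ⟨by rw [← ENNReal.toReal_eq_one_iff]; exact h1⟩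
  · refine ⟨φ.continuous.measurable, ?_⟩
    refine ext_of_forall_integral_eq_of_IsFiniteMeasure fun f => ?_
    rw [integral_map φ.continuous.measurable.aemeasurable
        f.continuous.measurable.aestronglyMeasurable]
    have e1 := hν (f.toContinuousMap.comp φ)
    have e2 := hν f.toContinuousMap
    have e3 : L (f.toContinuousMap.comp φ) = L f.toContinuousMap := by
      refine tendsto_nhds_unique (hL _) ?_
      have := (hL f.toContinuousMap).sub ((herg f.toContinuousMap ω).mono_left hU)
      rw [sub_zero] at this
      refine this.congr fun k => ?_
      rw [(hA k).comm]
      simp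
    rw [e3, ← e2] at e1
    exact e1
  · let x : C(Ω, ℝ) := ⟨fun z => Metric.infDist z (orbitClosure φ ω),
      Metric.continuous_infDist_pt _⟩
    have h0 : ∫ z, x z ∂ν = 0 := by
      rw [hν]
      exact hcst x 0 fun n => Metric.infDist_zero_of_mem (aux_oc_self φ ω n)
    have hx0 : 0 ≤ (⇑x : Ω → ℝ) := fun z => Metric.infDist_nonneg
    have h0' := (integral_eq_zero_iff_of_nonneg hx0 (aux_integrable x ν hfin)).1 h0
    filter_upwards [h0'] with z hz
    rw [(aux_oc_closed φ ω).mem_iff_infDist_zero ⟨ω, aux_oc_self φ ω 0⟩]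
    exact hz

theorem aux_pointwise {Ω : Type*} [MetricSpace Ω] [CompactSpace Ω] [Nonempty Ω] [MeasurableSpace Ω]
    [BorelSpace Ω] (φ : C(Ω, Ω)) (hmet : TopologicalSpace.MetrizableSpace (EllisE φ))
    (hmin : ∀ ω : Ω, ∃! m : Set Ω, IsMinimalSet φ m ∧ m ⊆ orbitClosure φ ω)
    (A : ℕ → C(Ω, ℝ) → C(Ω, ℝ)) (hA : ∀ k, AuxAvg φ (A k))
    (herg : ∀ x ω, Tendsto (fun k => A k x ω - A k x (φ ω)) atTop (𝓝 0)) (ω : Ω) (x : C(Ω, ℝ)) :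
    ∃ l : ℝ, Tendsto (fun k => A k x ω) atTop (𝓝 l) := by
  obtain ⟨m, ⟨hm, hmo⟩, huniq⟩ := hmin ω
  obtain ⟨b, hb⟩ := hm.1
  have key : ∀ U : Ultrafilter ℕ, (U : Filter ℕ) ≤ atTop → ∃ l : ℝ,
      Tendsto (fun k => A k x ω) U (𝓝 l) ∧
      Tendsto (fun N => birkhoffAverage ℝ φ x N b) atTop (𝓝 l) := by
    intro U hU
    obtain ⟨ν, h1, h2, h3, h4⟩ := aux_cluster φ A hA herg ω U hU
    refine ⟨_, h4 x, aux_unique φ hmet m hm b hb x ν h2 ?_⟩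
    refine aux_null φ hmet ν h2 m hm.2.1 hm.1 hm.2.2.1 _ h3 fun z hz => ?_
    obtain ⟨m', ⟨hm', hmo'⟩, -⟩ := hmin z
    have : m' = m := huniq m' ⟨hm', hmo'.trans
      (aux_oc_sub φ _ (aux_oc_closed φ ω) (aux_oc_maps φ ω) z hz)⟩
    subst this
    exact ⟨b, hb, hmo' hb⟩
  obtain ⟨l, -, hl⟩ := key (Ultrafilter.of atTop) (Ultrafilter.of_le _)
  refine ⟨l, tendsto_iff_ultrafilter _ _ _ |>.2 fun U hU => ?_⟩
  obtain ⟨l', h1, h2⟩ := key U hU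
  rwa [tendsto_nhds_unique hl h2]

theorem aux_backward {Ω : Type*} [MetricSpace Ω] [CompactSpace Ω] [Nonempty Ω] [MeasurableSpace Ω]
    [BorelSpace Ω] (φ : C(Ω, Ω)) (hmet : TopologicalSpace.MetrizableSpace (EllisE φ))
    (hmin : ∀ ω : Ω, ∃! m : Set Ω, IsMinimalSet φ m ∧ m ⊆ orbitClosure φ ω)
    (T : ℕ → SignedMeasure Ω → SignedMeasure Ω)
    (hT : ∀ k, T k ∈ convexHull ℝ (Set.range fun n : ℕ => (Vop φ)^[n]))
    (herg : ∀ (x : C(Ω, ℝ)) (μ : SignedMeasure Ω),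
        Tendsto (fun k => spair (⇑x) (T k μ) - spair (⇑x) (T k (Vop φ μ))) atTop (𝓝 0)) :
    ∃ S : SignedMeasure Ω → SignedMeasure Ω, ∀ (x : C(Ω, ℝ)) (μ : SignedMeasure Ω),
        Tendsto (fun k => spair (⇑x) (T k μ)) atTop (𝓝 (spair (⇑x) (S μ))) := by
  choose A hA hTA using fun k => aux_hull φ (T k) (hT k)
  have hp := fun x ω => aux_pointwise φ hmet hmin A hA (fun x ω => by
    have := herg x (diracSM ω)
    simp_rw [aux_Vdirac φ φ.continuous.measurable, hTA, aux_spair_dirac] at this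
    exact this) ω x
  choose f hf using hp
  have hbd : ∀ k x ω, ‖A k x ω‖ ≤ ‖x‖ := fun k x ω =>
    (hA k).bound x ω _ fun n => x.norm_coe_le_norm _
  have hint : ∀ (p : Measure Ω) (_ : IsFiniteMeasure p) x,
      Tendsto (fun k => ∫ ω, A k x ω ∂p) atTop (𝓝 (∫ ω, f x ω ∂p)) := by
    intro p _ x
    refine tendsto_integral_of_dominated_convergence (fun _ => ‖x‖) (fun k => ?_)
      (integrable_const _) (fun k => Eventually.of_forall (hbd k x))
      (Eventually.of_forall (hf x))
    exact (A k x).continuous.measurable.aestronglyMeasurable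
  have hr : ∀ (p : Measure Ω) (_ : IsFiniteMeasure p), ∃ r : Measure Ω, ∃ _ : IsFiniteMeasure r,
      ∀ x : C(Ω, ℝ), ∫ ω, x ω ∂r = ∫ ω, f x ω ∂p := by
    intro p hp
    refine aux_riesz (fun x => ∫ ω, f x ω ∂p) (fun x y => ?_) (fun c x => ?_) fun x hx => ?_
    · refine tendsto_nhds_unique (hint p hp _) (((hint p hp x).add (hint p hp y)).congr fun k => ?_)
      rw [(hA k).add, ← integral_add (aux_integrable _ _ hp) (aux_integrable _ _ hp)]
      rfl
    · refine tendsto_nhds_unique (hint p hp _) (((hint p hp x).const_mul c).congr fun k => ?_)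
      rw [(hA k).smul, ← integral_const_mul]
      rfl
    · exact ge_of_tendsto' (hint p hp x) fun k => integral_nonneg fun ω =>
        (hA k).nonneg x ω fun n => hx _
  have hS : ∀ μ : SignedMeasure Ω, ∃ s : SignedMeasure Ω, ∀ x : C(Ω, ℝ),
      Tendsto (fun k => spair (⇑x) (T k μ)) atTop (𝓝 (spair (⇑x) s)) := by
    intro μ
    obtain ⟨p, q, hp, hq, rfl⟩ := aux_decomp μ
    obtain ⟨p', hp', h1⟩ := hr p hp
    obtain ⟨q', hq', h2⟩ := hr q hq
    refine ⟨p'.toSignedMeasure - q'.toSignedMeasure, fun x => ?_⟩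
    rw [aux_spair_sub _ _ _ (aux_integrable x), h1, h2]
    refine ((hint p hp x).sub (hint q hq x)).congr fun k => ?_
    rw [hTA, aux_spair_sub _ _ _ (aux_integrable _)]
  choose S hS using hS
  exact ⟨S, fun x μ => hS μ x⟩

theorem aux_exists_min {Ω : Type*} [TopologicalSpace Ω] [CompactSpace Ω]
    (φ : C(Ω, Ω)) (F : Set Ω) (hF : IsClosed F) (hne : F.Nonempty) (hinv : Set.MapsTo φ F F) :
    ∃ m, IsMinimalSet φ m ∧ m ⊆ F := by
  obtain ⟨m, hmF, hm⟩ := zorn_superset_nonempty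
    {s : Set Ω | s.Nonempty ∧ IsClosed s ∧ Set.MapsTo φ s s} (by
      intro c hc hch hcn
      refine ⟨⋂₀ c, ⟨?_, ?_, ?_⟩, fun s hs => Set.sInter_subset_of_mem hs⟩
      · have : Nonempty c := hcn.to_subtype
        refine IsCompact.nonempty_sInter_of_directed_nonempty_isCompact_isClosed ?_
          (fun U hU => (hc hU).1) (fun U hU => (hc hU).2.1.isCompact) (fun U hU => (hc hU).2.1)
        exact IsChain.directedOn hch.symm
      · exact isClosed_sInter fun U hU => (hc hU).2.1
      · exact fun z hz => Set.mem_sInter.2 fun U hU => (hc hU).2.2 (Set.mem_sInter.1 hz U hU))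
    F ⟨hne, hF, hinv⟩
  refine ⟨m, ⟨hm.prop.1, hm.prop.2.1, hm.prop.2.2, fun m' h1 h2 h3 h4 => ?_⟩, hmF⟩
  exact hm.eq_of_subset ⟨h2, h3, h4⟩ h1

theorem aux_forward {Ω : Type*} [MetricSpace Ω] [CompactSpace Ω] [MeasurableSpace Ω]
    [BorelSpace Ω] (φ : C(Ω, Ω))
    (H : ∀ T : ℕ → SignedMeasure Ω → SignedMeasure Ω,
      (∀ k, T k ∈ convexHull ℝ (Set.range fun n : ℕ => (Vop φ)^[n])) →
      (∀ (x : C(Ω, ℝ)) (μ : SignedMeasure Ω),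
        Tendsto (fun k => spair (⇑x) (T k μ) - spair (⇑x) (T k (Vop φ μ))) atTop (𝓝 0)) →
      ∃ S : SignedMeasure Ω → SignedMeasure Ω, ∀ (x : C(Ω, ℝ)) (μ : SignedMeasure Ω),
        Tendsto (fun k => spair (⇑x) (T k μ)) atTop (𝓝 (spair (⇑x) (S μ))))
    (ω : Ω) (m₁ m₂ : Set Ω) (h₁ : IsMinimalSet φ m₁) (h₁o : m₁ ⊆ orbitClosure φ ω)
    (h₂ : IsMinimalSet φ m₂) (h₂o : m₂ ⊆ orbitClosure φ ω) : m₁ = m₂ := by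
  by_contra hne
  have hdisj : Disjoint m₁ m₂ := by
    rw [Set.disjoint_left]
    intro z hz1 hz2
    exact hne ((aux_min_oc φ m₁ h₁ z hz1).symm.trans (aux_min_oc φ m₂ h₂ z hz2))
  obtain ⟨x, hx1, hx2, hx3⟩ := exists_continuous_zero_one_of_isClosed h₁.2.1 h₂.2.1 hdisj
  obtain ⟨δ, hδ, hx⟩ := Metric.uniformContinuous_iff.1
    (CompactSpace.uniformContinuous_of_continuous x.continuous) (1 / 4) (by norm_num)
  obtain ⟨a, ha⟩ := h₁.1
  obtain ⟨b, hb⟩ := h₂.1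
  choose na hna using fun N => aux_shadow φ ω a (h₁o ha) N δ hδ
  choose nb hnb using fun N => aux_shadow φ ω b (h₂o hb) N δ hδ
  let s : ℕ → ℕ := fun k => if Even k then na k else nb k
  let w : ∀ k : ℕ, Fin (k + 1) → ℝ := fun k _ => ((k : ℝ) + 1)⁻¹
  have hw : ∀ k i, 0 ≤ w k i := fun k i => by positivity
  have hw1 : ∀ k, ∑ i, w k i = 1 := fun k => by
    simp only [w, Finset.sum_const, Finset.card_univ, Fintype.card_fin, nsmul_eq_mul]
    push_cast
    exact mul_inv_cancel₀ (by positivity)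
  let T : ℕ → SignedMeasure Ω → SignedMeasure Ω := fun k => ∑ i, w k i • (Vop φ)^[s k + i]
  have hval : ∀ k (y : C(Ω, ℝ)) μ, spair y (T k μ) =
      ((k : ℝ) + 1)⁻¹ * ∑ j ∈ Finset.range (k + 1), spair y ((Vop φ)^[s k + j] μ) := by
    intro k y μ
    have e : T k μ = ∑ i, w k i • ((Vop φ)^[s k + i] μ) := by simp [T, Finset.sum_apply]
    rw [e, aux_spair_sum _ _ _ fun i _ => hw k i, Finset.mul_sum,
      Finset.sum_range fun j => ((k : ℝ) + 1)⁻¹ * spair y ((Vop φ)^[s k + j] μ)]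
  have hbound : ∀ (y : C(Ω, ℝ)) (μ : SignedMeasure Ω), ∃ C, ∀ n,
      |spair y ((Vop φ)^[n] μ)| ≤ C := by
    intro y μ
    obtain ⟨p, q, hp, hq, rfl⟩ := aux_decomp μ
    refine ⟨‖y‖ * p.real Set.univ + ‖y‖ * q.real Set.univ, fun n => ?_⟩
    rw [aux_spair_iter]
    have := aux_spair_sub (y.comp ⟨φ^[n], φ.continuous.iterate n⟩) p q (aux_integrable _)
    refine (le_of_eq (congrArg abs this)).trans ((abs_sub _ _).trans (add_le_add ?_ ?_))
    · exact norm_integral_le_of_norm_le_const (Eventually.of_forall fun z => y.norm_coe_le_norm _)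
    · exact norm_integral_le_of_norm_le_const (Eventually.of_forall fun z => y.norm_coe_le_norm _)
  obtain ⟨S, hS⟩ := H T (fun k => mem_convexHull_of_exists_fintype (w k) _ (hw k) (hw1 k)
      (fun i => ⟨_, rfl⟩) rfl) (fun y μ => by
    obtain ⟨C, hC⟩ := hbound y μ
    refine squeeze_zero_norm (a := fun k : ℕ => (2 * C) * (1 / ((k : ℝ) + 1))) (fun k => ?_) (by
      simpa using (tendsto_one_div_add_atTop_nhds_zero_nat (𝕜 := ℝ)).const_mul (2 * C))
    rw [hval, hval, ← mul_sub, ← Finset.sum_sub_distrib]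
    have e : ∀ j, spair y ((Vop φ)^[s k + j] μ) - spair y ((Vop φ)^[s k + j] (Vop φ μ))
        = spair y ((Vop φ)^[s k + j] μ) - spair y ((Vop φ)^[s k + (j + 1)] μ) := by
      intro j
      rw [← add_assoc, Function.iterate_succ_apply]
    simp_rw [e]
    rw [Finset.sum_range_sub' fun j => spair y ((Vop φ)^[s k + j] μ), norm_mul, Real.norm_eq_abs,
      abs_of_nonneg (by positivity), one_div, mul_comm]
    refine mul_le_mul_of_nonneg_right ?_ (by positivity)
    refine (abs_sub _ _).trans ?_
    linarith [hC (s k + 0), hC (s k + (k + 1))])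
  have hlim := hS x (diracSM ω)
  have hd : ∀ n, spair x ((Vop φ)^[n] (diracSM ω)) = x (φ^[n] ω) := by
    intro n
    rw [aux_spair_iter]
    exact aux_spair_dirac (x.comp ⟨φ^[n], φ.continuous.iterate n⟩) ω
  simp_rw [hval, hd] at hlim
  have hav : ∀ (k : ℕ) (g : ℕ → ℝ) (l u : ℝ), (∀ j ≤ k, l ≤ g j ∧ g j ≤ u) →
      l ≤ ((k : ℝ) + 1)⁻¹ * ∑ j ∈ Finset.range (k + 1), g j ∧
      ((k : ℝ) + 1)⁻¹ * ∑ j ∈ Finset.range (k + 1), g j ≤ u := by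
    intro k g l u h
    have h1 : ∑ j ∈ Finset.range (k + 1), l ≤ ∑ j ∈ Finset.range (k + 1), g j :=
      Finset.sum_le_sum fun j hj => (h j (by simp at hj; omega)).1
    have h2 : ∑ j ∈ Finset.range (k + 1), g j ≤ ∑ j ∈ Finset.range (k + 1), u :=
      Finset.sum_le_sum fun j hj => (h j (by simp at hj; omega)).2
    rw [Finset.sum_const, Finset.card_range, nsmul_eq_mul] at h1 h2
    push_cast at h1 h2
    have hk : (0 : ℝ) < (k : ℝ) + 1 := by positivity
    rw [← div_eq_inv_mul, le_div_iff₀ hk, div_le_iff₀ hk]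
    constructor <;> linarith
  have heven : ∀ k : ℕ, Even k → ((k : ℝ) + 1)⁻¹ * ∑ j ∈ Finset.range (k + 1), x (φ^[s k + j] ω)
      ≤ 1 / 4 := by
    intro k hk
    refine (hav k _ (-(1 / 4)) _ fun j hj => ?_).2
    have h1 := hx (hna k j hj)
    have h2 : x (φ^[j] a) = 0 := hx1 (h₁.2.2.1.iterate j ha)
    rw [h2, Real.dist_eq, sub_zero, abs_lt] at h1
    simp only [s, hk, if_true]
    exact ⟨h1.1.le, h1.2.le⟩
  have hodd : ∀ k : ℕ, ¬ Even k → 3 / 4 ≤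
      ((k : ℝ) + 1)⁻¹ * ∑ j ∈ Finset.range (k + 1), x (φ^[s k + j] ω) := by
    intro k hk
    refine (hav k _ _ (5 / 4) fun j hj => ?_).1
    have h1 := hx (hnb k j hj)
    have h2 : x (φ^[j] b) = 1 := hx2 (h₂.2.2.1.iterate j hb)
    rw [h2, Real.dist_eq, abs_lt] at h1
    simp only [s, hk, if_false]
    constructor <;> linarith [h1.1, h1.2]
  have l1 := le_of_tendsto' (hlim.comp (tendsto_id.const_mul_atTop' (show 0 < 2 by norm_num)))
    (b := 1 / 4) fun k => heven (2 * k) (by simp)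
  have l2 := ge_of_tendsto' (hlim.comp (tendsto_atTop_mono (fun k => (by omega : k ≤ 2 * k + 1))
    tendsto_id)) (b := 3 / 4) fun k => hodd (2 * k + 1) (by simp)
  linarith

end Aux15

variable {Ω : Type*} [TopologicalSpace Ω] [CompactSpace Ω] [TopologicalSpace.MetrizableSpace Ω]
  [Nonempty Ω] [MeasurableSpace Ω] [BorelSpace Ω]

/-- Theorem 3.5: for an ordinary semicascade, all ergodic operator sequences from the convex
hull of `{Vⁿ : n ≥ 0}` converge in the weak* operator topology iff the orbit closure of every
point contains exactly one minimal set. -/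
theorem stmt_15 (φ : Ω → Ω) (hφ : Continuous φ)
    (hmet : TopologicalSpace.MetrizableSpace (EllisE φ)) :
    (∀ T : ℕ → SignedMeasure Ω → SignedMeasure Ω,
      (∀ k, T k ∈ convexHull ℝ (Set.range fun n : ℕ => (Vop φ)^[n])) →
      (∀ (x : C(Ω, ℝ)) (μ : SignedMeasure Ω),
        Tendsto (fun k => spair (⇑x) (T k μ) - spair (⇑x) (T k (Vop φ μ))) atTop (𝓝 0)) →
      ∃ S : SignedMeasure Ω → SignedMeasure Ω, ∀ (x : C(Ω, ℝ)) (μ : SignedMeasure Ω),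
        Tendsto (fun k => spair (⇑x) (T k μ)) atTop (𝓝 (spair (⇑x) (S μ)))) ↔
    (∀ ω : Ω, ∃! m : Set Ω, IsMinimalSet φ m ∧ m ⊆ orbitClosure φ ω) := by
  let _ : MetricSpace Ω := TopologicalSpace.metrizableSpaceMetric Ω
  constructor
  · intro H ω
    obtain ⟨m, hm, hmo⟩ := aux_exists_min ⟨φ, hφ⟩ (orbitClosure φ ω) isClosed_closure
      ⟨ω, aux_oc_self ⟨φ, hφ⟩ ω 0⟩ (aux_oc_maps ⟨φ, hφ⟩ ω)
    exact ⟨m, ⟨hm, hmo⟩, fun m' hm' =>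
      aux_forward ⟨φ, hφ⟩ H ω m' m hm'.1 hm'.2 hm hmo⟩
  · intro hmin T hT herg
    exact aux_backward ⟨φ, hφ⟩ hmet hmin T hT herg
end

section
/- Suppose the semicascade (Ω,φ) is tame and for every ω ∈ Ω the orbit closure of ω contains exactly one minimal set. Then every ergodic sequence (T_k) of operators from the convex hull of {V^n : n ≥ 0} converges in the weak* operator topology, and the support of every φ-ergodic Borel probability measure is a minimal set. -/
open MeasureTheory Filter Topology

namespace ErgAux

/-- Inductive construction of an independent sequence. -/
lemma builder {Ω ι : Type*} (P : Set Ω → Prop) (R : ι → ι → Prop) (A B : ι → Set Ω) (i0 : ι)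
    (S0 : Set Ω) (h0 : P S0) (hne : ∀ S, P S → S.Nonempty)
    (hstep : ∀ (F : Finset (Set Ω)) (i : ι), (∀ S ∈ F, P S) →
      ∃ j, R i j ∧ ∀ S ∈ F, P (S ∩ A j) ∧ P (S ∩ B j)) :
    ∃ u : ℕ → ι, (∀ k, R (u k) (u (k + 1))) ∧ ∀ (k : ℕ) (e : ℕ → Prop),
      ∃ ω ∈ S0, ∀ l < k, (e l → ω ∈ A (u l)) ∧ (¬ e l → ω ∈ B (u l)) := by
  classical
  let St := {p : ι × Finset (Set Ω) // ∀ S ∈ p.2, P S}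
  have hs : ∀ p : St, ∃ q : St, R p.1.1 q.1.1 ∧
      ∀ S ∈ p.1.2, (S ∩ A q.1.1) ∈ q.1.2 ∧ (S ∩ B q.1.1) ∈ q.1.2 := by
    rintro ⟨⟨i, F⟩, hF⟩
    obtain ⟨j, hj, hj'⟩ := hstep F i hF
    refine ⟨⟨(j, F.image (fun S => S ∩ A j) ∪ F.image (fun S => S ∩ B j)), ?_⟩, hj, ?_⟩
    · intro S hS
      simp only [Finset.mem_union, Finset.mem_image] at hS
      rcases hS with ⟨T, hT, rfl⟩ | ⟨T, hT, rfl⟩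
      · exact (hj' T hT).1
      · exact (hj' T hT).2
    · intro S hS
      simp only [Finset.mem_union, Finset.mem_image]
      exact ⟨Or.inl ⟨S, hS, rfl⟩, Or.inr ⟨S, hS, rfl⟩⟩
  choose nx hnx1 hnx2 using hs
  let st : ℕ → St := fun k => Nat.rec ⟨(i0, {S0}), by simpa using h0⟩ (fun _ p => nx p) k
  have hst : ∀ k, st (k + 1) = nx (st k) := fun k => rfl
  refine ⟨fun k => (st (k + 1)).1.1, fun k => hnx1 (st (k + 1)), fun k e => ?_⟩
  suffices h : ∃ S ∈ (st k).1.2, S ⊆ S0 ∧ ∀ l < k, (e l → S ⊆ A ((st (l + 1)).1.1)) ∧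
      (¬ e l → S ⊆ B ((st (l + 1)).1.1)) by
    obtain ⟨S, hS, hS0, hS'⟩ := h
    obtain ⟨ω, hω⟩ := hne S ((st k).2 S hS)
    exact ⟨ω, hS0 hω, fun l hl => ⟨fun he => (hS' l hl).1 he hω, fun he => (hS' l hl).2 he hω⟩⟩
  induction k with
  | zero => exact ⟨S0, by simp [st], subset_rfl, by simp⟩
  | succ k ih =>
    obtain ⟨S, hS, hS0, hS'⟩ := ih
    have h2 := hnx2 (st k) S hS
    rw [← hst k] at h2
    by_cases he : e k
    · refine ⟨_, h2.1, Set.inter_subset_left.trans hS0, fun l hl => ?_⟩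
      rcases Nat.lt_succ_iff_lt_or_eq.1 hl with hl | rfl
      · exact ⟨fun h => Set.inter_subset_left.trans ((hS' l hl).1 h),
          fun h => Set.inter_subset_left.trans ((hS' l hl).2 h)⟩
      · exact ⟨fun _ => Set.inter_subset_right, fun h => absurd he h⟩
    · refine ⟨_, h2.2, Set.inter_subset_left.trans hS0, fun l hl => ?_⟩
      rcases Nat.lt_succ_iff_lt_or_eq.1 hl with hl | rfl
      · exact ⟨fun h => Set.inter_subset_left.trans ((hS' l hl).1 h),
          fun h => Set.inter_subset_left.trans ((hS' l hl).2 h)⟩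
      · exact ⟨fun h => absurd h he, fun _ => Set.inter_subset_right⟩

/-- Limits of positive functionals are given by measures. -/
lemma rmk_lim {Ω : Type*} [TopologicalSpace Ω] [CompactSpace Ω] [T2Space Ω]
    [MeasurableSpace Ω] [BorelSpace Ω] {ι : Type*} (l : Filter ι) [l.NeBot]
    (Λ : ι → C(Ω, ℝ) →ₗ[ℝ] ℝ) (hpos : ∀ k f, (∀ ω, 0 ≤ f ω) → 0 ≤ Λ k f)
    (hlim : ∀ f, ∃ a, Tendsto (fun k => Λ k f) l (𝓝 a)) :
    ∃ μ : Measure Ω, IsFiniteMeasure μ ∧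
      ∀ f : C(Ω, ℝ), Tendsto (fun k => Λ k f) l (𝓝 (∫ ω, f ω ∂μ)) := by
  choose L hL using hlim
  let L' : C(Ω, ℝ) →ₗ[ℝ] ℝ :=
    { toFun := L
      map_add' := fun f g => tendsto_nhds_unique (hL (f + g))
        (((hL f).add (hL g)).congr fun k => (map_add (Λ k) f g).symm)
      map_smul' := fun c f => tendsto_nhds_unique (hL (c • f))
        (((hL f).const_smul c).congr fun k => (map_smul (Λ k) c f).symm) }
  have hL'pos : ∀ f : C(Ω, ℝ), (∀ ω, 0 ≤ f ω) → 0 ≤ L' f := fun f hf =>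
    ge_of_tendsto' (hL f) fun k => hpos k f hf
  let J : CompactlySupportedContinuousMap Ω ℝ →ₗ[ℝ] C(Ω, ℝ) :=
    { toFun := fun f => f.toContinuousMap
      map_add' := fun f g => by ext; rfl
      map_smul' := fun c f => by ext; rfl }
  let Λ' : CompactlySupportedContinuousMap Ω ℝ →ₚ[ℝ] ℝ :=
    PositiveLinearMap.mk₀ (L'.comp J) (fun f hf => hL'pos _ (fun ω => hf ω))
  refine ⟨RealRMK.rieszMeasure Λ', ?_, fun f => ?_⟩
  · have := RealRMK.regular_rieszMeasure Λ'
    infer_instance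
  · have := RealRMK.integral_rieszMeasure Λ' (CompactlySupportedContinuousMap.continuousMapEquiv f)
    have h2 : (∫ ω, f ω ∂(RealRMK.rieszMeasure Λ')) = L f := this
    rw [h2]
    exact hL f

lemma weak_lim {H : Type*} [NormedAddCommGroup H] [InnerProductSpace ℝ H] [CompleteSpace H]
    (U : Ultrafilter ℕ) (v : ℕ → H) (C : ℝ) (hC : ∀ n, ‖v n‖ ≤ C) :
    ∃ w : H, ∀ u : H, Tendsto (fun n => inner ℝ u (v n)) U (𝓝 (inner ℝ u w)) := by
  have hc := WeakDual.isCompact_closedBall (𝕜 := ℝ) (E := H) 0 C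
  let V : ℕ → WeakDual ℝ H := fun n => StrongDual.toWeakDual (InnerProductSpace.toDual ℝ H (v n))
  have h1 : ((U.map V : Ultrafilter (WeakDual ℝ H)) : Filter (WeakDual ℝ H)) ≤
      𝓟 (WeakDual.toStrongDual ⁻¹' Metric.closedBall (0 : StrongDual ℝ H) C) := by
    rw [le_principal_iff]
    refine Filter.mem_map.2 (Filter.univ_mem' fun n => ?_)
    show InnerProductSpace.toDual ℝ H (v n) ∈ Metric.closedBall (0 : StrongDual ℝ H) C
    rw [mem_closedBall_zero_iff, LinearIsometryEquiv.norm_map]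
    exact hC n
  obtain ⟨ψ, -, hψ⟩ := isCompact_iff_ultrafilter_le_nhds.1 hc _ h1
  obtain ⟨w, hw⟩ := (InnerProductSpace.toDual ℝ H).surjective (WeakDual.toStrongDual ψ)
  refine ⟨w, fun u => ?_⟩
  have h2 : Tendsto V U (𝓝 ψ) := hψ
  have h3 := ((WeakDual.eval_continuous (𝕜 := ℝ) (E := H) u).tendsto ψ).comp h2
  have h4 : ψ u = inner ℝ u w := by
    have : WeakDual.toStrongDual ψ u = inner ℝ w u := by
      rw [← hw]; exact InnerProductSpace.toDual_apply_apply
    rw [real_inner_comm] at this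
    exact this
  rw [h4] at h3
  refine h3.congr fun n => ?_
  show InnerProductSpace.toDual ℝ H (v n) u = _
  rw [InnerProductSpace.toDual_apply_apply, real_inner_comm]

lemma ultra_lim {ι : Type*} (U : Ultrafilter ι) (a : ι → ℝ) (C : ℝ) (h : ∀ i, |a i| ≤ C) :
    ∃ b, Tendsto a U (𝓝 b) := by
  have h1 : ((U.map a : Ultrafilter ℝ) : Filter ℝ) ≤ 𝓟 (Set.Icc (-C) C) := by
    rw [le_principal_iff]
    exact Filter.mem_map.2 (Filter.univ_mem' fun n => abs_le.1 (h n))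
  obtain ⟨b, -, hb⟩ := isCompact_iff_ultrafilter_le_nhds.1 (isCompact_Icc (a := -C) (b := C)) _ h1
  exact ⟨b, hb⟩

lemma tame_no_indep {Ω : Type*} [TopologicalSpace Ω] [CompactSpace Ω] (φ : Ω → Ω)
    (hφ : Continuous φ) (htame : Tame φ hφ) (x : C(Ω, ℝ)) (r s : ℝ) (hrs : r < s)
    (n : ℕ → ℕ) (hn : StrictMono n)
    (hind : ∀ (k : ℕ) (e : ℕ → Prop), ∃ ω : Ω, ∀ l < k,
      (e l → s < x (φ^[n l] ω)) ∧ (¬ e l → x (φ^[n l] ω) < r)) : False := by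
  have h := htame x n hn
  have key : (s - r) / 2 ≤ sInf {r : ℝ | ∃ a : ℕ →₀ ℝ, (∑ k ∈ a.support, |a k|) = 1 ∧
      r = ‖∑ k ∈ a.support, a k • x.comp ⟨φ^[n k], hφ.iterate (n k)⟩‖} := by
    apply le_csInf
    · refine ⟨_, Finsupp.single 0 1, ?_, rfl⟩
      rw [Finsupp.support_single _ one_ne_zero]; simp
    · rintro _ ⟨a, ha, rfl⟩
      obtain ⟨k, hk⟩ : ∃ k, ∀ l ∈ a.support, l < k :=
        ⟨a.support.sup id + 1, fun l hl => Nat.lt_succ_of_le (Finset.le_sup (f := id) hl)⟩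
      obtain ⟨ω, hω⟩ := hind k (fun l => 0 < a l)
      obtain ⟨ω', hω'⟩ := hind k (fun l => ¬ 0 < a l)
      set F := ∑ k ∈ a.support, a k • x.comp ⟨φ^[n k], hφ.iterate (n k)⟩ with hF
      have h1 := F.norm_coe_le_norm ω
      have h2 := F.norm_coe_le_norm ω'
      have e : ∀ z, F z = ∑ k ∈ a.support, a k * x (φ^[n k] z) := by
        intro z
        simp [hF]
      have h3 : s - r ≤ F ω - F ω' := by
        rw [e, e, ← Finset.sum_sub_distrib]
        calc s - r = ∑ k ∈ a.support, |a k| * (s - r) := by rw [← Finset.sum_mul, ha, one_mul]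
          _ ≤ _ := by
            apply Finset.sum_le_sum
            intro l hl
            have q := hω l (hk l hl)
            have q' := hω' l (hk l hl)
            by_cases hp : 0 < a l
            · have q1 := q.1 hp
              have q2 := q'.2 (not_not.2 hp)
              rw [abs_of_pos hp]
              nlinarith
            · have q1 := q.2 hp
              have q2 := q'.1 hp
              rw [abs_of_nonpos (not_lt.1 hp)]
              nlinarith [not_lt.1 hp]
      have h4 := abs_le.1 (Real.norm_eq_abs _ ▸ h1)
      have h5 := abs_le.1 (Real.norm_eq_abs _ ▸ h2)
      linarith [h4.2, h5.1]
  rw [h] at key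
  linarith

lemma totBdd_L1 {Ω : Type*} [TopologicalSpace Ω] [CompactSpace Ω]
    [SecondCountableTopology Ω]
    [MeasurableSpace Ω] [BorelSpace Ω] (ρ : Measure Ω) [IsFiniteMeasure ρ]
    (f : ℕ → C(Ω, ℝ)) (C : ℝ) (hC : ∀ n, ‖f n‖ ≤ C)
    (hno : ∀ r s : ℝ, r < s → ∀ n : ℕ → ℕ, StrictMono n →
      (∀ (k : ℕ) (e : ℕ → Prop), ∃ ω : Ω, ∀ l < k,
      (e l → s < f (n l) ω) ∧ (¬ e l → f (n l) ω < r)) → False) :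
    TotallyBounded (Set.range fun n => ContinuousMap.toLp 1 ρ ℝ (f n)) := by
  rw [totallyBounded_iff_ultrafilter]
  intro G hG
  set F : ℕ → Lp ℝ 1 ρ := fun n => ContinuousMap.toLp 1 ρ ℝ (f n) with hF
  have hG' : F '' Set.univ ∈ G := by
    rw [Set.image_univ]; exact le_principal_iff.1 hG
  set U : Ultrafilter ℕ := Ultrafilter.ofComapInfPrincipal hG' with hU
  have hUG : U.map F = G := Ultrafilter.ofComapInfPrincipal_eq_of_map hG'
  suffices h : ∃ a, Tendsto F U (𝓝 a) by
    obtain ⟨a, ha⟩ := h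
    rw [← hUG]
    exact ha.cauchy_map
  rcases Ultrafilter.le_cofinite_or_eq_pure U with hcof | ⟨m, hm⟩
  swap
  · refine ⟨F m, ?_⟩
    rw [hm]
    exact tendsto_pure_nhds F m
  -- weak limits
  let f2 : ℕ → Lp ℝ 2 ρ := fun n => ContinuousMap.toLp 2 ρ ℝ (f n)
  have hf2 : ∀ n, ‖f2 n‖ ≤ ‖(ContinuousMap.toLp 2 ρ ℝ : C(Ω, ℝ) →L[ℝ] Lp ℝ 2 ρ)‖ * C := fun n =>
    (ContinuousLinearMap.le_opNorm _ _).trans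
      (mul_le_mul_of_nonneg_left (hC n) (norm_nonneg _))
  obtain ⟨w, hw⟩ := weak_lim U f2 _ hf2
  obtain ⟨g, hg⟩ := weak_lim U (fun n => |f2 n - w|)
    (‖(ContinuousMap.toLp 2 ρ ℝ : C(Ω, ℝ) →L[ℝ] Lp ℝ 2 ρ)‖ * C + ‖w‖) (fun n => by
      rw [norm_abs_eq_norm]
      exact (norm_sub_le _ _).trans (by gcongr; exact hf2 n))
  have hfi : ∀ n, Integrable (f n) ρ := fun n =>
    (f n).continuous.integrable_of_hasCompactSupport (HasCompactSupport.of_compactSpace _)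
  have hwi : Integrable w ρ := (Lp.memLp w).integrable (by norm_num)
  have hgi : Integrable g ρ := (Lp.memLp g).integrable (by norm_num)
  have hae : ∀ n, (|f2 n - w| : Lp ℝ 2 ρ) =ᵐ[ρ] fun ω => |f n ω - w ω| := by
    intro n
    filter_upwards [Lp.coeFn_abs (f2 n - w), Lp.coeFn_sub (f2 n) w,
      ContinuousMap.coeFn_toLp (p := 2) (𝕜 := ℝ) ρ (f n)] with ω h1 h2 h3
    rw [h1, h2, Pi.sub_apply]
    simp only [f2]
    rw [h3]
  have hwA : ∀ A, MeasurableSet A →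
      Tendsto (fun n => ∫ ω in A, f n ω ∂ρ) U (𝓝 (∫ ω in A, w ω ∂ρ)) := by
    intro A hA
    have := hw (indicatorConstLp 2 hA (measure_ne_top ρ A) 1)
    simp only [L2.inner_indicatorConstLp_one] at this
    refine this.congr fun n => ?_
    exact integral_congr_ae (ae_restrict_of_ae (ContinuousMap.coeFn_toLp (p := 2) (𝕜 := ℝ) ρ (f n)))
  have hgA : ∀ A, MeasurableSet A →
      Tendsto (fun n => ∫ ω in A, |f n ω - w ω| ∂ρ) U (𝓝 (∫ ω in A, g ω ∂ρ)) := by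
    intro A hA
    have := hg (indicatorConstLp 2 hA (measure_ne_top ρ A) 1)
    simp only [L2.inner_indicatorConstLp_one] at this
    refine this.congr fun n => ?_
    exact integral_congr_ae (ae_restrict_of_ae (hae n))
  by_cases hg0 : ∫ ω, g ω ∂ρ ≤ 0
  · have hw1 : MemLp w 1 ρ := (Lp.memLp w).mono_exponent (by norm_num)
    refine ⟨hw1.toLp, ?_⟩
    rw [tendsto_iff_norm_sub_tendsto_zero]
    have h0 : ∫ ω, g ω ∂ρ = 0 := by
      refine le_antisymm hg0 ?_
      have := hgA Set.univ MeasurableSet.univ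
      simp only [Measure.restrict_univ] at this
      exact ge_of_tendsto' this fun n => integral_nonneg fun ω => abs_nonneg _
    have h1 := hgA Set.univ MeasurableSet.univ
    simp only [Measure.restrict_univ] at h1
    rw [h0] at h1
    refine h1.congr fun n => ?_
    rw [L1.norm_eq_integral_norm]
    apply integral_congr_ae
    filter_upwards [Lp.coeFn_sub (F n) hw1.toLp, hw1.coeFn_toLp,
      ContinuousMap.coeFn_toLp (p := 1) (𝕜 := ℝ) ρ (f n)] with ω h1 h2 h3
    rw [h1, Pi.sub_apply, h2, Real.norm_eq_abs]
    simp only [F]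
    rw [h3]
  · exfalso
    push Not at hg0
    have hgm : Measurable g := (Lp.stronglyMeasurable g).measurable
    have hwm : Measurable w := (Lp.stronglyMeasurable w).measurable
    have h1 : ρ {ω | 0 < g ω} ≠ 0 := by
      intro h
      have : ∀ᵐ ω ∂ρ, g ω ≤ 0 := by
        rw [ae_iff]; simpa only [not_le] using h
      exact absurd (integral_nonpos_of_ae this) (not_le.2 hg0)
    obtain ⟨N, hN⟩ : ∃ N : ℕ, ρ {ω | 1 / ((N : ℝ) + 1) < g ω} ≠ 0 := by
      by_contra! h
      apply h1
      refine measure_mono_null ?_ (measure_iUnion_null h)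
      intro ω hω
      obtain ⟨N, hN⟩ := exists_nat_one_div_lt (show 0 < g ω from hω)
      exact Set.mem_iUnion.2 ⟨N, hN⟩
    set η : ℝ := 1 / ((N : ℝ) + 1) with hη
    have hηpos : 0 < η := by positivity
    obtain ⟨q, hq⟩ : ∃ q : ℚ, ρ {ω | η < g ω ∧ |w ω - q| < η / 8} ≠ 0 := by
      by_contra! h
      apply hN
      refine measure_mono_null ?_ (measure_iUnion_null h)
      intro ω hω
      obtain ⟨q, hq1, hq2⟩ := exists_rat_btwn (show w ω - η/8 < w ω + η/8 by linarith)
      exact Set.mem_iUnion.2 ⟨q, hω, abs_lt.2 ⟨by linarith, by linarith⟩⟩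
    set S0 : Set Ω := {ω | η < g ω ∧ |w ω - q| < η / 8} with hS0
    have hS0m : MeasurableSet S0 :=
      (measurableSet_lt measurable_const hgm).inter
        (measurableSet_lt ((hwm.sub measurable_const).abs) measurable_const)
    -- the key estimates
    have key : ∀ S : Set Ω, MeasurableSet S → S ⊆ S0 → 0 < ρ S → ∀ᶠ j in (U : Filter ℕ),
        0 < ρ (S ∩ {ω | (q : ℝ) + η / 4 < f j ω}) ∧ 0 < ρ (S ∩ {ω | f j ω < (q : ℝ) - η / 4}) := by
      intro S hS hSS hSp
      have hSr : 0 < (ρ S).toReal := ENNReal.toReal_pos hSp.ne' (measure_ne_top _ _)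
      have hgS : η * (ρ S).toReal ≤ ∫ ω in S, g ω ∂ρ := by
        have : ∫ ω in S, η ∂ρ ≤ ∫ ω in S, g ω ∂ρ :=
          setIntegral_mono_on (integrable_const _) hgi.integrableOn hS
            (fun ω hω => (hSS hω).1.le)
        simpa [mul_comm, Measure.real] using this
      have ta : Tendsto (fun n => ∫ ω in S, |f n ω - w ω| ∂ρ + (∫ ω in S, f n ω ∂ρ - ∫ ω in S, w ω ∂ρ))
          U (𝓝 (∫ ω in S, g ω ∂ρ + (∫ ω in S, w ω ∂ρ - ∫ ω in S, w ω ∂ρ))) :=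
        (hgA S hS).add ((hwA S hS).sub tendsto_const_nhds)
      have tb : Tendsto (fun n => ∫ ω in S, |f n ω - w ω| ∂ρ - (∫ ω in S, f n ω ∂ρ - ∫ ω in S, w ω ∂ρ))
          U (𝓝 (∫ ω in S, g ω ∂ρ - (∫ ω in S, w ω ∂ρ - ∫ ω in S, w ω ∂ρ))) :=
        (hgA S hS).sub ((hwA S hS).sub tendsto_const_nhds)
      have ea := ta.eventually (lt_mem_nhds (show 3 / 4 * η * (ρ S).toReal < _ by nlinarith))
      have eb := tb.eventually (lt_mem_nhds (show 3 / 4 * η * (ρ S).toReal < _ by nlinarith))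
      filter_upwards [ea, eb] with j ja jb
      have ii : IntegrableOn (fun ω => f j ω - w ω) S ρ := ((hfi j).sub hwi).integrableOn
      rw [← integral_sub (hfi j).integrableOn hwi.integrableOn] at ja jb
      rw [← integral_add ii.abs ii] at ja
      rw [← integral_sub ii.abs ii] at jb
      constructor
      · rw [pos_iff_ne_zero]
        intro h0
        have hle : ∀ᵐ ω ∂(ρ.restrict S), |f j ω - w ω| + (f j ω - w ω) ≤ 3 / 4 * η := by
          rw [ae_restrict_iff' hS]
          have : ∀ᵐ ω ∂ρ, ω ∉ S ∩ {ω | (q : ℝ) + η / 4 < f j ω} := measure_eq_zero_iff_ae_notMem.1 h0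
          filter_upwards [this] with ω h1 h2
          have h3 := abs_lt.1 (hSS h2).2
          have h4 : f j ω ≤ q + η / 4 := by
            by_contra! h5
            exact h1 ⟨h2, h5⟩
          rcases abs_cases (f j ω - w ω) with h | h <;> linarith
        have := integral_mono_ae (ii.abs.add ii) (integrable_const _) hle
        simp only [integral_const, Measure.real, Measure.restrict_apply_univ, smul_eq_mul, Pi.add_apply] at this
        linarith
      · rw [pos_iff_ne_zero]
        intro h0
        have hle : ∀ᵐ ω ∂(ρ.restrict S), |f j ω - w ω| - (f j ω - w ω) ≤ 3 / 4 * η := by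
          rw [ae_restrict_iff' hS]
          have : ∀ᵐ ω ∂ρ, ω ∉ S ∩ {ω | f j ω < (q : ℝ) - η / 4} := measure_eq_zero_iff_ae_notMem.1 h0
          filter_upwards [this] with ω h1 h2
          have h3 := abs_lt.1 (hSS h2).2
          have h4 : q - η / 4 ≤ f j ω := by
            by_contra! h5
            exact h1 ⟨h2, h5⟩
          rcases abs_cases (f j ω - w ω) with h | h <;> linarith
        have := integral_mono_ae (ii.abs.sub ii) (integrable_const _) hle
        simp only [integral_const, Measure.real, Measure.restrict_apply_univ, smul_eq_mul, Pi.sub_apply] at this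
        linarith
    obtain ⟨u, hu1, hu2⟩ := builder (fun S => MeasurableSet S ∧ S ⊆ S0 ∧ 0 < ρ S)
      (fun i j : ℕ => i < j) (fun j => {ω | (q : ℝ) + η / 4 < f j ω})
      (fun j => {ω | f j ω < (q : ℝ) - η / 4}) 0 S0 ⟨hS0m, subset_rfl, pos_iff_ne_zero.2 hq⟩
      (fun S hS => nonempty_of_measure_ne_zero hS.2.2.ne') (by
        intro T i hT
        have h1 : ∀ᶠ j in (U : Filter ℕ), i < j := by
          refine hcof ?_
          rw [Nat.cofinite_eq_atTop]
          exact eventually_gt_atTop i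
        have h2 : ∀ᶠ j in (U : Filter ℕ), ∀ S ∈ T, 0 < ρ (S ∩ {ω | (q : ℝ) + η / 4 < f j ω}) ∧
            0 < ρ (S ∩ {ω | f j ω < (q : ℝ) - η / 4}) :=
          (Filter.eventually_all_finset T).2 fun S hS => key S (hT S hS).1 (hT S hS).2.1 (hT S hS).2.2
        obtain ⟨j, hj1, hj2⟩ := (h1.and h2).exists
        refine ⟨j, hj1, fun S hS => ⟨⟨(hT S hS).1.inter ?_, Set.inter_subset_left.trans (hT S hS).2.1,
          (hj2 S hS).1⟩, ⟨(hT S hS).1.inter ?_, Set.inter_subset_left.trans (hT S hS).2.1,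
          (hj2 S hS).2⟩⟩⟩
        · exact measurableSet_lt measurable_const (f j).continuous.measurable
        · exact measurableSet_lt (f j).continuous.measurable measurable_const)
    refine hno (q - η / 4) (q + η / 4) (by linarith) u (strictMono_nat_of_lt_succ hu1) fun k e => ?_
    obtain ⟨ω, -, hω⟩ := hu2 k e
    exact ⟨ω, hω⟩

/-- The set of compositions `x ∘ φ^n`, as continuous functions. -/
def comps {Ω : Type*} [TopologicalSpace Ω] (φ : Ω → Ω) (hφ : Continuous φ) (x : C(Ω, ℝ)) :
    Set C(Ω, ℝ) :=
  Set.range fun n : ℕ => x.comp ⟨φ^[n], hφ.iterate n⟩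

lemma no_indep_conv {Ω : Type*} [TopologicalSpace Ω] [CompactSpace Ω]
    [TopologicalSpace.MetrizableSpace Ω] (φ : Ω → Ω)
    (hφ : Continuous φ) (htame : Tame φ hφ) (x : C(Ω, ℝ)) (r s : ℝ) (hrs : r < s)
    (g : ℕ → C(Ω, ℝ)) (hg : ∀ k, g k ∈ convexHull ℝ (comps φ hφ x))
    (hind : ∀ (k : ℕ) (e : ℕ → Prop), ∃ ω : Ω, ∀ l < k,
      (e l → s < g l ω) ∧ (¬ e l → g l ω < r)) : False := by
  classical
  borelize Ω
  let _ := TopologicalSpace.metrizableSpaceMetric Ω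
  have hpt : ∀ (k : ℕ) (e : Fin k → Bool), ∃ ω : Ω, ∀ l : Fin k,
      (e l = true → s < g l ω) ∧ (e l = false → g l ω < r) := by
    intro k e
    obtain ⟨ω, hω⟩ := hind k (fun l => ∃ h : l < k, e ⟨l, h⟩ = true)
    refine ⟨ω, fun l => ⟨fun h => (hω l l.2).1 ⟨l.2, h⟩, fun h => (hω l l.2).2 ?_⟩⟩
    rintro ⟨h1, h2⟩
    rw [show (⟨(l : ℕ), h1⟩ : Fin k) = l from rfl, h] at h2
    exact Bool.false_ne_true h2
  choose pt hpt1 hpt2 using hpt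
  let Λ : ℕ → C(Ω, ℝ) →ₗ[ℝ] ℝ := fun k =>
    { toFun := fun f => ((2 : ℝ) ^ k)⁻¹ * ∑ e : Fin k → Bool, f (pt k e)
      map_add' := fun f f' => by
        simp only [ContinuousMap.add_apply, Finset.sum_add_distrib]; ring
      map_smul' := fun c f => by
        simp only [ContinuousMap.smul_apply, smul_eq_mul, ← Finset.mul_sum, RingHom.id_apply]
        ring }
  have hΛ : ∀ k f, Λ k f = ((2 : ℝ) ^ k)⁻¹ * ∑ e : Fin k → Bool, f (pt k e) := fun _ _ => rfl
  obtain ⟨ρ, hρ, hlim⟩ := rmk_lim (hyperfilter ℕ : Filter ℕ) Λ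
    (fun k f hf => by
      rw [hΛ]
      exact mul_nonneg (by positivity) (Finset.sum_nonneg fun e _ => hf _))
    (fun f => by
      apply ultra_lim _ _ ‖f‖
      intro k
      rw [hΛ, abs_mul, abs_of_pos (by positivity)]
      have h1 : |∑ e : Fin k → Bool, f (pt k e)| ≤ 2 ^ k * ‖f‖ := by
        refine (Finset.abs_sum_le_sum_abs _ _).trans ?_
        refine (Finset.sum_le_card_nsmul _ _ ‖f‖ fun e _ => f.norm_coe_le_norm _).trans ?_
        simp
      rw [inv_mul_le_iff₀ (by positivity)]
      exact h1)
  have hsep : ∀ i j, i ≠ j → (s - r) / 2 ≤ ∫ ω, |g i ω - g j ω| ∂ρ := by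
    intro i j hij
    refine ge_of_tendsto (hlim (|g i - g j|)) ?_
    have hev : ∀ᶠ k in (hyperfilter ℕ : Filter ℕ), max i j < k := by
      refine hyperfilter_le_cofinite ?_
      rw [Nat.cofinite_eq_atTop]
      exact eventually_gt_atTop _
    filter_upwards [hev] with k hk
    have hi : i < k := (le_max_left _ _).trans_lt hk
    have hj : j < k := (le_max_right _ _).trans_lt hk
    rw [hΛ]
    let fl : (Fin k → Bool) → (Fin k → Bool) := fun e => Function.update e ⟨i, hi⟩ (! e ⟨i, hi⟩)
    have hfl : Function.Involutive fl := by
      intro e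
      simp [fl]
    set Q : (Fin k → Bool) → ℝ := fun e => |g i - g j| (pt k e) with hQ
    have hQ' : ∀ e, Q e = |g i (pt k e) - g j (pt k e)| := fun e => rfl
    have hQ0 : ∀ e, 0 ≤ Q e := fun e => by rw [hQ']; positivity
    have hne : ∀ e : Fin k → Bool, e ⟨i, hi⟩ ≠ e ⟨j, hj⟩ → s - r ≤ Q e := by
      intro e he
      rw [hQ']
      cases h1 : e ⟨i, hi⟩ <;> cases h2 : e ⟨j, hj⟩
      · exact absurd (h1.trans h2.symm) he
      · have a1 := hpt2 k e _ h1
        have a2 := hpt1 k e _ h2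
        rw [abs_sub_comm]
        refine le_trans ?_ (le_abs_self _)
        simp only at a1 a2
        linarith
      · have a1 := hpt1 k e _ h1
        have a2 := hpt2 k e _ h2
        refine le_trans ?_ (le_abs_self _)
        simp only at a1 a2
        linarith
      · exact absurd (h1.trans h2.symm) he
    have hsum : ∑ e, Q e = ∑ e, Q (fl e) := (Equiv.sum_comp (hfl.toPerm) Q).symm
    have h2 : ∀ e, s - r ≤ Q e + Q (fl e) := by
      intro e
      by_cases he : e ⟨i, hi⟩ = e ⟨j, hj⟩
      · have : s - r ≤ Q (fl e) := by
          apply hne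
          have hji : (⟨j, hj⟩ : Fin k) ≠ ⟨i, hi⟩ := fun h => hij (Fin.mk.inj_iff.1 h).symm
          simp [fl, Function.update_of_ne hji, he]
        linarith [hQ0 e]
      · linarith [hne e he, hQ0 (fl e)]
    have h3 : (2 : ℝ) ^ k * (s - r) ≤ ∑ e, Q e + ∑ e, Q e := by
      nth_rewrite 2 [hsum]
      rw [← Finset.sum_add_distrib]
      have := Finset.card_nsmul_le_sum Finset.univ (fun e => Q e + Q (fl e)) (s - r) fun e _ => h2 e
      simpa using this
    rw [le_inv_mul_iff₀ (by positivity)]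
    linarith
  have htb : TotallyBounded (convexHull ℝ
      (Set.range fun n => ContinuousMap.toLp 1 ρ ℝ (x.comp ⟨φ^[n], hφ.iterate n⟩))) := by
    rw [totallyBounded_convexHull]
    refine totBdd_L1 ρ _ ‖x‖ (fun n => ?_) ?_
    · rw [ContinuousMap.norm_le _ (norm_nonneg _)]
      exact fun ω => x.norm_coe_le_norm _
    · intro r s hrs n hn h
      exact tame_no_indep φ hφ htame x r s hrs n hn h
  let G : ℕ → Lp ℝ 1 ρ := fun k => ContinuousMap.toLp 1 ρ ℝ (g k)
  have hGmem : ∀ k, G k ∈ convexHull ℝ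
      (Set.range fun n => ContinuousMap.toLp 1 ρ ℝ (x.comp ⟨φ^[n], hφ.iterate n⟩)) := by
    intro k
    have h1 := (ContinuousMap.toLp 1 ρ ℝ : C(Ω, ℝ) →L[ℝ] Lp ℝ 1 ρ).toLinearMap.image_convexHull
      (comps φ hφ x)
    have h2 : (ContinuousMap.toLp 1 ρ ℝ : C(Ω, ℝ) →L[ℝ] Lp ℝ 1 ρ).toLinearMap (g k) ∈
      (ContinuousMap.toLp 1 ρ ℝ : C(Ω, ℝ) →L[ℝ] Lp ℝ 1 ρ).toLinearMap ''
        convexHull ℝ (comps φ hφ x) := ⟨_, hg k, rfl⟩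
    rw [h1, comps, ← Set.range_comp] at h2
    exact h2
  have hGd : ∀ i j, dist (G i) (G j) = ∫ ω, |g i ω - g j ω| ∂ρ := by
    intro i j
    rw [dist_eq_norm, L1.norm_eq_integral_norm]
    apply integral_congr_ae
    filter_upwards [Lp.coeFn_sub (G i) (G j), ContinuousMap.coeFn_toLp (p := 1) (𝕜 := ℝ) ρ (g i),
      ContinuousMap.coeFn_toLp (p := 1) (𝕜 := ℝ) ρ (g j)] with ω h1 h2 h3
    rw [h1, Pi.sub_apply, Real.norm_eq_abs]
    simp only [G]
    rw [h2, h3]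
  have hC : Cauchy (((hyperfilter ℕ).map G : Ultrafilter (Lp ℝ 1 ρ)) : Filter (Lp ℝ 1 ρ)) := by
    apply totallyBounded_iff_ultrafilter.1 htb
    rw [le_principal_iff]
    exact Filter.mem_map.2 (Filter.univ_mem' hGmem)
  obtain ⟨t, ht, htd⟩ := (Metric.cauchy_iff.1 hC).2 ((s - r) / 2) (by linarith)
  have ht' : G ⁻¹' t ∈ hyperfilter ℕ := ht
  have hinf : (G ⁻¹' t).Infinite := fun hfin => notMem_hyperfilter_of_finite hfin ht'
  obtain ⟨i, hi, j, hj, hij⟩ := hinf.nontrivial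
  have := htd _ hi _ hj
  rw [hGd] at this
  linarith [hsep i j hij]

lemma no_alt {Ω : Type*} [TopologicalSpace Ω] [CompactSpace Ω]
    [TopologicalSpace.MetrizableSpace Ω] (φ : Ω → Ω)
    (hφ : Continuous φ) (htame : Tame φ hφ) (x : C(Ω, ℝ)) (r s : ℝ) (hrs : r < s)
    (P : Set Ω → Prop) (S0 : Set Ω) (h0 : P S0) (hne : ∀ S, P S → S.Nonempty)
    (hstep : ∀ F : Finset (Set Ω), (∀ S ∈ F, P S) → ∃ g ∈ convexHull ℝ (comps φ hφ x),
      ∀ S ∈ F, P (S ∩ {ω | s < g ω}) ∧ P (S ∩ {ω | g ω < r})) : False := by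
  obtain ⟨u, -, hu⟩ := builder (ι := convexHull ℝ (comps φ hφ x)) P (fun _ _ => True)
    (fun g => {ω | s < (g : C(Ω, ℝ)) ω}) (fun g => {ω | (g : C(Ω, ℝ)) ω < r})
    ⟨x.comp ⟨φ^[0], hφ.iterate 0⟩, subset_convexHull _ _ ⟨0, rfl⟩⟩ S0 h0 hne (by
      intro F _ hF
      obtain ⟨g, hg, h⟩ := hstep F hF
      exact ⟨⟨g, hg⟩, trivial, h⟩)
  refine no_indep_conv φ hφ htame x r s hrs (fun k => (u k : C(Ω, ℝ))) (fun k => (u k).2) ?_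
  intro k e
  obtain ⟨ω, -, hω⟩ := hu k e
  exact ⟨ω, hω⟩

lemma avg_mem {Ω : Type*} [TopologicalSpace Ω] (φ : Ω → Ω) (hφ : Continuous φ) (x : C(Ω, ℝ))
    (N : ℕ) (hN : N ≠ 0) (n : ℕ) : ∃ g ∈ convexHull ℝ (comps φ hφ x),
      ∀ ω, g ω = birkhoffAverage ℝ φ x N (φ^[n] ω) := by
  have hN' : (N : ℝ) ≠ 0 := Nat.cast_ne_zero.2 hN
  refine ⟨∑ i ∈ Finset.range N, (N : ℝ)⁻¹ • x.comp ⟨φ^[i + n], hφ.iterate (i + n)⟩,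
    (convex_convexHull ℝ _).sum_mem (fun _ _ => by positivity) ?_
      (fun i _ => subset_convexHull _ _ ⟨i + n, rfl⟩), fun ω => ?_⟩
  · simp [hN']
  · simp [birkhoffAverage, birkhoffSum, Finset.mul_sum, Function.iterate_add_apply]

lemma bAvg_neg {Ω : Type*} [TopologicalSpace Ω] (φ : Ω → Ω) (x : C(Ω, ℝ)) (N : ℕ) (z : Ω) :
    birkhoffAverage ℝ φ (-x : C(Ω, ℝ)) N z = - birkhoffAverage ℝ φ x N z := by
  simp [birkhoffAverage, birkhoffSum]

lemma bAvg_cont {Ω : Type*} [TopologicalSpace Ω] (φ : Ω → Ω) (hφ : Continuous φ) (x : C(Ω, ℝ))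
    (N : ℕ) : Continuous (fun z => birkhoffAverage ℝ φ x N z) := by
  simp only [birkhoffAverage, birkhoffSum]
  exact (continuous_finsetSum _ fun i _ => x.continuous.comp (hφ.iterate i)).const_smul ((N : ℝ)⁻¹)

lemma bAvg_shift {Ω : Type*} [TopologicalSpace Ω] [CompactSpace Ω] (φ : Ω → Ω) (x : C(Ω, ℝ))
    (N l : ℕ) (z : Ω) :
    |birkhoffAverage ℝ φ x N (φ^[l] z) - birkhoffAverage ℝ φ x N z| ≤ l * (2 * ‖x‖ / N) := by
  induction l with
  | zero => simp
  | succ l ih =>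
    have h := dist_birkhoffAverage_apply_birkhoffAverage ℝ φ x N (φ^[l] z)
    rw [Function.iterate_succ_apply']
    rw [Real.dist_eq, Real.dist_eq] at h
    have h2 : |x (φ^[N] (φ^[l] z)) - x (φ^[l] z)| ≤ 2 * ‖x‖ := by
      refine (abs_sub _ _).trans ?_
      have a := x.norm_coe_le_norm (φ^[N] (φ^[l] z))
      have b := x.norm_coe_le_norm (φ^[l] z)
      rw [Real.norm_eq_abs] at a b
      linarith
    have h3 : |x (φ^[N] (φ^[l] z)) - x (φ^[l] z)| / N ≤ 2 * ‖x‖ / N := by gcongr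
    refine (abs_sub_le _ (birkhoffAverage ℝ φ x N (φ^[l] z)) _).trans ?_
    push_cast
    linarith

lemma upper_lim {Ω : Type*} [TopologicalSpace Ω] [CompactSpace Ω] (φ : Ω → Ω)
    (hφ : Continuous φ) (x : C(Ω, ℝ)) (Y : Set Ω) (hY : IsCompact Y) (hYn : Y.Nonempty)
    (hYi : Set.MapsTo φ Y Y) :
    ∃ s : ℝ, (∀ N : ℕ, N ≠ 0 → ∃ z ∈ Y, s ≤ birkhoffAverage ℝ φ x N z) ∧
      ∀ ε > 0, ∀ᶠ N : ℕ in atTop, ∀ z ∈ Y, birkhoffAverage ℝ φ x N z ≤ s + ε := by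
  have hcont : ∀ N, Continuous (birkhoffSum φ x N) := fun N => by
    show Continuous (fun z => ∑ i ∈ Finset.range N, x (φ^[i] z))
    exact continuous_finsetSum _ fun i _ => x.continuous.comp (hφ.iterate i)
  let u : ℕ → ℝ := fun N => sSup (birkhoffSum φ x N '' Y)
  have hbdd : ∀ N, BddAbove (birkhoffSum φ x N '' Y) := fun N =>
    (hY.image (hcont N)).bddAbove
  have hle : ∀ N, ∀ z ∈ Y, birkhoffSum φ x N z ≤ u N := fun N z hz =>
    le_csSup (hbdd N) ⟨z, hz, rfl⟩
  have hatt : ∀ N, ∃ z ∈ Y, birkhoffSum φ x N z = u N := fun N => by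
    obtain ⟨z, hz, h⟩ := (hY.image (hcont N)).sSup_mem (hYn.image _)
    exact ⟨z, hz, h⟩
  have hsub : Subadditive u := by
    intro a b
    obtain ⟨z, hz, h⟩ := hatt (a + b)
    rw [← h, birkhoffSum_add]
    exact add_le_add (hle a z hz) (hle b _ (hYi.iterate a hz))
  have hlow : BddBelow (Set.range fun n => u n / n) := by
    refine ⟨-‖x‖, ?_⟩
    rintro _ ⟨n, rfl⟩
    rcases Nat.eq_zero_or_pos n with rfl | hn
    · simp
    obtain ⟨z, hz⟩ := hYn
    have h1 : -(n * ‖x‖) ≤ birkhoffSum φ x n z := by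
      have : |birkhoffSum φ x n z| ≤ n * ‖x‖ := by
        refine (Finset.abs_sum_le_sum_abs _ _).trans ?_
        refine (Finset.sum_le_card_nsmul _ _ ‖x‖ fun e _ => x.norm_coe_le_norm _).trans ?_
        simp
      exact (abs_le.1 this).1
    have h2 := h1.trans (hle n z hz)
    have hn' : (0 : ℝ) < n := Nat.cast_pos.2 hn
    simp only
    rw [le_div_iff₀ hn']
    linarith
  refine ⟨hsub.lim, fun N hN => ?_, fun ε hε => ?_⟩
  · obtain ⟨z, hz, h⟩ := hatt N
    refine ⟨z, hz, ?_⟩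
    have := hsub.lim_le_div hlow hN
    rw [← h] at this
    simpa [birkhoffAverage, div_eq_inv_mul] using this
  · have := (hsub.tendsto_lim hlow).eventually (gt_mem_nhds (show hsub.lim < hsub.lim + ε by linarith))
    filter_upwards [this] with N hN z hz
    refine le_trans ?_ hN.le
    simp only [birkhoffAverage, smul_eq_mul, div_eq_inv_mul]
    exact mul_le_mul_of_nonneg_left (hle N z hz) (by positivity)

lemma hit_bdd {Ω : Type*} [TopologicalSpace Ω] (φ : Ω → Ω) (hφ : Continuous φ)
    (Y : Set Ω) (hY : IsCompact Y) (W : Set Ω) (hW : IsOpen W)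
    (h : ∀ z ∈ Y, ∃ n, φ^[n] z ∈ W) : ∃ L : ℕ, ∀ z ∈ Y, ∃ l ≤ L, φ^[l] z ∈ W := by
  obtain ⟨t, ht⟩ := hY.elim_finite_subcover (fun n => φ^[n] ⁻¹' W)
    (fun n => hW.preimage (hφ.iterate n)) (fun z hz => Set.mem_iUnion.2 (h z hz))
  refine ⟨t.sup id, fun z hz => ?_⟩
  obtain ⟨l, hl, hl'⟩ := Set.mem_iUnion₂.1 (ht hz)
  exact ⟨l, Finset.le_sup (f := id) hl, hl'⟩

lemma orbit_hit {Ω : Type*} [TopologicalSpace Ω] (φ : Ω → Ω) (z y : Ω)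
    (hy : y ∈ orbitClosure φ z) (W : Set Ω) (hW : IsOpen W) (hyW : y ∈ W) :
    ∃ n, φ^[n] z ∈ W := by
  obtain ⟨_, h1, n, rfl⟩ := mem_closure_iff.1 hy W hW hyW
  exact ⟨n, h1⟩

lemma orbitClosure_mapsTo {Ω : Type*} [TopologicalSpace Ω] (φ : Ω → Ω) (hφ : Continuous φ) (z : Ω) :
    Set.MapsTo φ (orbitClosure φ z) (orbitClosure φ z) := by
  refine Set.MapsTo.closure ?_ hφ
  rintro _ ⟨n, rfl⟩
  exact ⟨n + 1, Function.iterate_succ_apply' φ n z⟩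

lemma orbitClosure_subset {Ω : Type*} [TopologicalSpace Ω] (φ : Ω → Ω) (z : Ω) (Y : Set Ω)
    (hY : IsClosed Y) (hYi : Set.MapsTo φ Y Y) (hz : z ∈ Y) : orbitClosure φ z ⊆ Y := by
  refine closure_minimal ?_ hY
  rintro _ ⟨n, rfl⟩
  exact hYi.iterate n hz

lemma self_mem_orbitClosure {Ω : Type*} [TopologicalSpace Ω] (φ : Ω → Ω) (z : Ω) :
    z ∈ orbitClosure φ z := subset_closure ⟨0, rfl⟩

lemma sync {Ω : Type*} [TopologicalSpace Ω] (φ : Ω → Ω) (hφ : Continuous φ)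
    (Y : Set Ω) (hY : IsCompact Y) (hYi : Set.MapsTo φ Y Y) (m : Set Ω) (hm : m.Nonempty)
    (hmi : Set.MapsTo φ m m)
    (hYm : ∀ z ∈ Y, m ⊆ orbitClosure φ z) (F : Finset Ω) (hF : ∀ z ∈ F, z ∈ Y) :
    ∀ W : Set Ω, IsOpen W → m ⊆ W → ∃ n, ∀ z ∈ F, φ^[n] z ∈ W := by
  classical
  induction F using Finset.induction_on with
  | empty => intro W _ _; exact ⟨0, by simp⟩
  | insert a F ha ih =>
    intro W hW hmW
    obtain ⟨y, hy⟩ := hm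
    obtain ⟨L, hL⟩ := hit_bdd φ hφ Y hY W hW
      (fun z hz => orbit_hit φ z y (hYm z hz hy) W hW (hmW hy))
    obtain ⟨n, hn⟩ := ih (fun z hz => hF z (Finset.mem_insert_of_mem hz))
      (⋂ l ∈ Finset.range (L + 1), φ^[l] ⁻¹' W)
      (isOpen_biInter_finset fun l _ => hW.preimage (hφ.iterate l))
      (Set.subset_iInter₂ fun l _ z hz => hmW (hmi.iterate l hz))
    obtain ⟨l, hl, hl'⟩ := hL (φ^[n] a) (hYi.iterate n (hF a (Finset.mem_insert_self _ _)))
    refine ⟨l + n, fun z hz => ?_⟩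
    rw [Function.iterate_add_apply]
    rcases Finset.mem_insert.1 hz with rfl | hz
    · exact hl'
    · exact Set.mem_iInter₂.1 (hn z hz) l (Finset.mem_range.2 (by omega))

lemma minimal_ue {Ω : Type*} [TopologicalSpace Ω] [CompactSpace Ω]
    [TopologicalSpace.MetrizableSpace Ω] (φ : Ω → Ω)
    (hφ : Continuous φ) (htame : Tame φ hφ) (x : C(Ω, ℝ)) (m : Set Ω) (hm : IsMinimalSet φ m) :
    ∃ c : ℝ, ∀ ε > 0, ∀ᶠ N : ℕ in atTop, ∀ z ∈ m, |birkhoffAverage ℝ φ x N z - c| ≤ ε := by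
  obtain ⟨hne, hcl, hinv, hmin⟩ := hm
  obtain ⟨s, hs1, hs2⟩ := upper_lim φ hφ x m hcl.isCompact hne hinv
  obtain ⟨r, hr1, hr2⟩ := upper_lim φ hφ (-x) m hcl.isCompact hne hinv
  simp only [bAvg_neg] at hr1 hr2
  have horb : ∀ z ∈ m, orbitClosure φ z = m := fun z hz =>
    hmin _ (orbitClosure_subset φ z m hcl hinv hz) ⟨z, self_mem_orbitClosure φ z⟩ isClosed_closure
      (orbitClosure_mapsTo φ hφ z)
  have hsr : s ≤ -r := by
    by_contra! hlt
    set d := (s + r) / 3 with hd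
    have hdpos : 0 < d := by rw [hd]; linarith
    refine no_alt φ hφ htame x (-r + d) (s - d) (by linarith)
      (fun S => IsOpen S ∧ (S ∩ m).Nonempty) Set.univ ⟨isOpen_univ, by simpa using hne⟩
      (fun S hS => hS.2.mono Set.inter_subset_left) ?_
    intro F hF
    have hev : ∀ᶠ N : ℕ in atTop, ∀ S ∈ F, ∀ z ∈ m, ∃ l, φ^[l] z ∈ S ∧
        |birkhoffAverage ℝ φ x N (φ^[l] z) - birkhoffAverage ℝ φ x N z| < d := by
      rw [Filter.eventually_all_finset]
      intro S hS
      obtain ⟨hSo, y, hyS, hym⟩ := hF S hS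
      obtain ⟨L, hL⟩ := hit_bdd φ hφ m hcl.isCompact S hSo
        (fun z hz => orbit_hit φ z y (by rw [horb z hz]; exact hym) S hSo hyS)
      have ht : Tendsto (fun N : ℕ => (L : ℝ) * (2 * ‖x‖ / N)) atTop (𝓝 (L * 0)) :=
        (tendsto_const_div_atTop_nhds_zero_nat _).const_mul _
      rw [mul_zero] at ht
      filter_upwards [ht.eventually (gt_mem_nhds hdpos)] with N hN z hz
      obtain ⟨l, hl, hl'⟩ := hL z hz
      refine ⟨l, hl', (bAvg_shift φ x N l z).trans_lt (lt_of_le_of_lt ?_ hN)⟩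
      gcongr
    obtain ⟨N, hN0, hN⟩ := ((eventually_ne_atTop 0).and hev).exists
    obtain ⟨g, hg, hgv⟩ := avg_mem φ hφ x N hN0 0
    simp only [Function.iterate_zero, id] at hgv
    refine ⟨g, hg, fun S hS => ⟨⟨(hF S hS).1.inter (isOpen_lt continuous_const g.continuous), ?_⟩,
      ⟨(hF S hS).1.inter (isOpen_lt g.continuous continuous_const), ?_⟩⟩⟩
    · obtain ⟨z, hz, hz'⟩ := hs1 N hN0
      obtain ⟨l, hl, hl'⟩ := hN S hS z hz
      refine ⟨φ^[l] z, ⟨hl, ?_⟩, hinv.iterate l hz⟩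
      show s - d < g _
      rw [hgv]
      linarith [(abs_lt.1 hl').1]
    · obtain ⟨z, hz, hz'⟩ := hr1 N hN0
      obtain ⟨l, hl, hl'⟩ := hN S hS z hz
      refine ⟨φ^[l] z, ⟨hl, ?_⟩, hinv.iterate l hz⟩
      show g _ < -r + d
      rw [hgv]
      linarith [(abs_lt.1 hl').2]
  refine ⟨s, fun ε hε => ?_⟩
  filter_upwards [hs2 ε hε, hr2 ε hε] with N h1 h2 z hz
  rw [abs_le]
  constructor <;> linarith [h1 z hz, h2 z hz]

lemma cont_int {Ω : Type*} [TopologicalSpace Ω] [CompactSpace Ω] [MeasurableSpace Ω]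
    [BorelSpace Ω] (μ : Measure Ω) [IsFiniteMeasure μ] (f : C(Ω, ℝ)) : Integrable f μ :=
  f.continuous.integrable_of_hasCompactSupport (HasCompactSupport.of_compactSpace _)

lemma ue_upper {Ω : Type*} [TopologicalSpace Ω] [CompactSpace Ω]
    [TopologicalSpace.MetrizableSpace Ω] (φ : Ω → Ω)
    (hφ : Continuous φ) (htame : Tame φ hφ) (x : C(Ω, ℝ)) (Y : Set Ω) (hYc : IsClosed Y)
    (hYn : Y.Nonempty) (hYi : Set.MapsTo φ Y Y) (m : Set Ω) (hm : m.Nonempty)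
    (hmi : Set.MapsTo φ m m) (hYm : ∀ z ∈ Y, m ⊆ orbitClosure φ z) (c : ℝ)
    (hc : ∀ ε > 0, ∀ᶠ N : ℕ in atTop, ∀ z ∈ m, birkhoffAverage ℝ φ x N z ≤ c + ε) :
    ∀ ε > 0, ∀ᶠ N : ℕ in atTop, ∀ z ∈ Y, birkhoffAverage ℝ φ x N z ≤ c + ε := by
  classical
  borelize Ω
  let _ := TopologicalSpace.metrizableSpaceMetric Ω
  obtain ⟨s, hs1, hs2⟩ := upper_lim φ hφ x Y hYc.isCompact hYn hYi
  suffices hsc : s ≤ c by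
    intro ε hε
    filter_upwards [hs2 ε hε] with N hN z hz
    linarith [hN z hz]
  by_contra! hlt
  have hz : ∀ k : ℕ, ∃ z ∈ Y, s ≤ birkhoffAverage ℝ φ x (k + 1) z := fun k => hs1 _ (by omega)
  choose z hzY hzs using hz
  let Λ : ℕ → C(Ω, ℝ) →ₗ[ℝ] ℝ := fun k =>
    { toFun := fun f => birkhoffAverage ℝ φ f (k + 1) (z k)
      map_add' := fun f f' => by
        simp only [birkhoffAverage, birkhoffSum, ContinuousMap.add_apply, Finset.sum_add_distrib,
          smul_add]
      map_smul' := fun a f => by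
        simp only [birkhoffAverage, birkhoffSum, ContinuousMap.smul_apply, smul_eq_mul,
          ← Finset.mul_sum, RingHom.id_apply]
        ring }
  have hΛ : ∀ k f, Λ k f = birkhoffAverage ℝ φ f (k + 1) (z k) := fun _ _ => rfl
  have hΛ' : ∀ k (f : C(Ω, ℝ)), Λ k f = ((k : ℝ) + 1)⁻¹ * ∑ i ∈ Finset.range (k + 1), f (φ^[i] (z k)) := by
    intro k f
    rw [hΛ]
    simp [birkhoffAverage, birkhoffSum]
  obtain ⟨μ, hμf, hlim⟩ := rmk_lim (hyperfilter ℕ : Filter ℕ) Λ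
    (fun k f hf => by
      rw [hΛ']
      exact mul_nonneg (by positivity) (Finset.sum_nonneg fun e _ => hf _))
    (fun f => by
      apply ultra_lim _ _ ‖f‖
      intro k
      rw [hΛ', abs_mul, abs_of_pos (by positivity), inv_mul_le_iff₀ (by positivity)]
      refine (Finset.abs_sum_le_sum_abs _ _).trans ?_
      refine (Finset.sum_le_card_nsmul _ _ ‖f‖ fun e _ => f.norm_coe_le_norm _).trans ?_
      simp)
  have hle : (hyperfilter ℕ : Filter ℕ) ≤ atTop := by
    rw [← Nat.cofinite_eq_atTop]; exact hyperfilter_le_cofinite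
  have hone : (μ Set.univ).toReal = 1 := by
    have h1 := hlim 1
    have h2 : ∀ k, Λ k 1 = 1 := by
      intro k
      rw [hΛ']
      have : ((k : ℝ) + 1) ≠ 0 := by positivity
      simp [this]
    simp only [h2] at h1
    have h3 := tendsto_nhds_unique h1 tendsto_const_nhds
    simpa [Measure.real] using h3
  have hinv : ∀ f : C(Ω, ℝ), ∫ ω, f (φ ω) ∂μ = ∫ ω, f ω ∂μ := by
    intro f
    have h1 := hlim (f.comp ⟨φ, hφ⟩)
    have h2 := hlim f
    have h3 : Tendsto (fun k => Λ k (f.comp ⟨φ, hφ⟩) - Λ k f) (hyperfilter ℕ : Filter ℕ) (𝓝 0) := by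
      have h4 : Tendsto (fun k : ℕ => 2 * ‖f‖ / ((k + 1 : ℕ) : ℝ)) (hyperfilter ℕ : Filter ℕ) (𝓝 0) :=
        ((tendsto_const_div_atTop_nhds_zero_nat (2 * ‖f‖)).comp (tendsto_add_atTop_nat 1)).mono_left hle
      refine squeeze_zero_norm (fun k => ?_) h4
      have h5 := bAvg_shift φ f (k + 1) 1 (z k)
      rw [Nat.cast_one, one_mul] at h5
      refine le_trans (le_of_eq ?_) h5
      rw [Real.norm_eq_abs, hΛ, hΛ]
      congr 2
      simp only [birkhoffAverage, birkhoffSum, ContinuousMap.comp_apply, ContinuousMap.coe_mk,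
        Function.iterate_one]
      congr 1
      refine Finset.sum_congr rfl fun i _ => ?_
      rw [← Function.iterate_succ_apply, ← Function.iterate_succ_apply' φ]
    have := tendsto_nhds_unique h3 (h1.sub h2)
    simp only [ContinuousMap.comp_apply, ContinuousMap.coe_mk] at this
    linarith
  have hiter : ∀ n, ∫ ω, x (φ^[n] ω) ∂μ = ∫ ω, x ω ∂μ := by
    intro n
    induction n with
    | zero => rfl
    | succ n ih =>
      rw [← ih]
      exact hinv (x.comp ⟨φ^[n], hφ.iterate n⟩)
  have hxs : s ≤ ∫ ω, x ω ∂μ := ge_of_tendsto' (hlim x) hzs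
  have hconv : ∀ g ∈ convexHull ℝ (comps φ hφ x), s ≤ ∫ ω, g ω ∂μ := by
    intro g hg
    refine convexHull_min (t := {g : C(Ω, ℝ) | s ≤ ∫ ω, g ω ∂μ}) ?_ ?_ hg
    · rintro _ ⟨n, rfl⟩
      show s ≤ ∫ ω, x (φ^[n] ω) ∂μ
      rw [hiter]; exact hxs
    · intro g hg g' hg' a b ha hb hab
      show s ≤ ∫ ω, (a * g ω + b * g' ω) ∂μ
      rw [integral_add ((cont_int μ g).const_mul a) ((cont_int μ g').const_mul b),
        integral_const_mul, integral_const_mul]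
      have e1 : a * s ≤ a * ∫ ω, g ω ∂μ := mul_le_mul_of_nonneg_left hg ha
      have e2 : b * s ≤ b * ∫ ω, g' ω ∂μ := mul_le_mul_of_nonneg_left hg' hb
      have e3 : a * s + b * s = s := by rw [← add_mul, hab, one_mul]
      linarith
  have hYae : ∀ᵐ ω ∂μ, ω ∈ Y := by
    let D : C(Ω, ℝ) := ⟨fun ω => Metric.infDist ω Y, Metric.continuous_infDist_pt Y⟩
    have h1 := hlim D
    have h2 : ∀ k, Λ k D = 0 := by
      intro k
      rw [hΛ']
      have : ∑ i ∈ Finset.range (k + 1), D (φ^[i] (z k)) = 0 :=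
        Finset.sum_eq_zero fun i _ => Metric.infDist_zero_of_mem (hYi.iterate i (hzY k))
      rw [this, mul_zero]
    simp only [h2] at h1
    have h3 := tendsto_nhds_unique h1 tendsto_const_nhds
    have h4 := (integral_eq_zero_iff_of_nonneg (fun ω => Metric.infDist_nonneg) (cont_int μ D)).1 h3
    filter_upwards [h4] with ω hω
    exact (hYc.mem_iff_infDist_zero hYn).2 hω
  set d := (s - c) / 3 with hd
  have hdpos : 0 < d := by rw [hd]; linarith
  refine no_alt φ hφ htame x (c + d) (s - d) (by linarith)
    (fun S => IsOpen S ∧ 0 < μ S) Set.univ ⟨isOpen_univ, ?_⟩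
    (fun S hS => nonempty_of_measure_ne_zero hS.2.ne') ?_
  · rw [pos_iff_ne_zero]
    intro h
    rw [h] at hone
    simp at hone
  intro F hF
  obtain ⟨δ, hδ0, hδ⟩ : ∃ δ : ℝ, 0 < δ ∧ ∀ S ∈ F, δ < d * (μ S).toReal := by
    have h1 : ∀ᶠ δ in 𝓝[>] (0 : ℝ), ∀ S ∈ F, δ < d * (μ S).toReal := by
      rw [Filter.eventually_all_finset]
      intro S hS
      have : 0 < d * (μ S).toReal :=
        mul_pos hdpos (ENNReal.toReal_pos (hF S hS).2.ne' (measure_ne_top _ _))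
      exact nhdsWithin_le_nhds (gt_mem_nhds this)
    obtain ⟨δ, h2, h3⟩ := (h1.and self_mem_nhdsWithin).exists
    exact ⟨δ, h3, h2⟩
  obtain ⟨N, hN0, hN1, hN2⟩ :=
    ((eventually_ne_atTop 0).and ((hs2 δ hδ0).and (hc (d / 2) (by linarith)))).exists
  have hpt : ∀ S ∈ F, ∃ p ∈ S, p ∈ Y ∧ ∀ t ∈ 𝓝 p, 0 < μ t := by
    intro S hS
    have h1 : μ (S ∩ Y) ≠ 0 := by
      have : μ (S ∩ Y) = μ S := by
        apply measure_congr
        filter_upwards [hYae] with ω hω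
        exact propext (and_iff_left hω)
      rw [this]
      exact (hF S hS).2.ne'
    obtain ⟨p, hp, hp'⟩ := exists_mem_forall_mem_nhdsWithin_pos_measure h1
    exact ⟨p, hp.1, hp.2, fun t ht => hp' t (mem_nhdsWithin_of_mem_nhds ht)⟩
  have : Nonempty Ω := ⟨hYn.some⟩
  choose! p hpS hpY hpμ using hpt
  obtain ⟨n, hn⟩ := sync φ hφ Y hYc.isCompact hYi m hm hmi hYm (F.image p)
    (by
      intro q hq
      obtain ⟨S, hS, rfl⟩ := Finset.mem_image.1 hq
      exact hpY S hS)
    {ω | birkhoffAverage ℝ φ x N ω < c + d} (isOpen_lt (bAvg_cont φ hφ x N) continuous_const)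
    (fun q hq => lt_of_le_of_lt (hN2 q hq) (by linarith))
  obtain ⟨g, hg, hgv⟩ := avg_mem φ hφ x N hN0 n
  refine ⟨g, hg, fun S hS => ⟨⟨(hF S hS).1.inter (isOpen_lt continuous_const g.continuous), ?_⟩,
    ⟨(hF S hS).1.inter (isOpen_lt g.continuous continuous_const), ?_⟩⟩⟩
  · rw [pos_iff_ne_zero]
    intro h0
    have hSm : MeasurableSet S := (hF S hS).1.measurableSet
    have hae : ∀ᵐ ω ∂μ, g ω ≤ (s + δ) - S.indicator (fun _ => d + δ) ω := by
      filter_upwards [hYae, measure_eq_zero_iff_ae_notMem.1 h0] with ω h1 h2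
      by_cases hω : ω ∈ S
      · rw [Set.indicator_of_mem hω]
        have : g ω ≤ s - d := by
          by_contra! h3
          exact h2 ⟨hω, h3⟩
        linarith
      · rw [Set.indicator_of_notMem hω, hgv]
        linarith [hN1 _ (hYi.iterate n h1)]
    have hI : Integrable (S.indicator (fun _ => d + δ)) μ := (integrable_const _).indicator hSm
    have h1 := integral_mono_ae (cont_int μ g) ((integrable_const (s + δ)).sub hI) hae
    simp only [Pi.sub_apply] at h1
    rw [integral_sub (integrable_const _) hI, integral_indicator hSm] at h1
    simp only [integral_const, Measure.real, Measure.restrict_apply_univ, smul_eq_mul, hone,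
      one_mul] at h1
    have h2 := hconv g hg
    have h3 := hδ S hS
    have h4 : 0 ≤ (μ S).toReal * δ := by positivity
    nlinarith
  · refine hpμ S hS _ (((hF S hS).1.inter (isOpen_lt g.continuous continuous_const)).mem_nhds
      ⟨hpS S hS, ?_⟩)
    show g (p S) < c + d
    rw [hgv]
    exact hn _ (Finset.mem_image_of_mem p hS)

lemma ue_orbit {Ω : Type*} [TopologicalSpace Ω] [CompactSpace Ω]
    [TopologicalSpace.MetrizableSpace Ω] (φ : Ω → Ω)
    (hφ : Continuous φ) (htame : Tame φ hφ)
    (hmin : ∀ ω : Ω, ∃! m : Set Ω, IsMinimalSet φ m ∧ m ⊆ orbitClosure φ ω) (x : C(Ω, ℝ)) (ω : Ω) :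
    ∃ c : ℝ, ∀ ε > 0, ∀ᶠ N : ℕ in atTop, ∀ z ∈ orbitClosure φ ω,
      |birkhoffAverage ℝ φ x N z - c| ≤ ε := by
  obtain ⟨m, ⟨hm, hmY⟩, huniq⟩ := hmin ω
  have hYc : IsClosed (orbitClosure φ ω) := isClosed_closure
  have hYi := orbitClosure_mapsTo φ hφ ω
  have hYm : ∀ z ∈ orbitClosure φ ω, m ⊆ orbitClosure φ z := by
    intro z hz
    obtain ⟨m', ⟨hm', hm'2⟩, -⟩ := hmin z
    rw [← huniq m' ⟨hm', hm'2.trans (orbitClosure_subset φ z _ hYc hYi hz)⟩]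
    exact hm'2
  obtain ⟨c, hc⟩ := minimal_ue φ hφ htame x m hm
  have h1 := ue_upper φ hφ htame x _ hYc ⟨ω, self_mem_orbitClosure φ ω⟩ hYi m hm.1 hm.2.2.1 hYm c
    (fun ε hε => (hc ε hε).mono fun N h z hz => by linarith [(abs_le.1 (h z hz)).2])
  have h2 := ue_upper φ hφ htame (-x) _ hYc ⟨ω, self_mem_orbitClosure φ ω⟩ hYi m hm.1 hm.2.2.1 hYm
    (-c) (fun ε hε => (hc ε hε).mono fun N h z hz => by
      rw [bAvg_neg]; linarith [(abs_le.1 (h z hz)).1])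
  simp only [bAvg_neg] at h2
  refine ⟨c, fun ε hε => ?_⟩
  filter_upwards [h1 ε hε, h2 ε hε] with N h1 h2 z hz
  rw [abs_le]
  constructor <;> linarith [h1 z hz, h2 z hz]

section SignedPairing

variable {Ω : Type*} [TopologicalSpace Ω] [CompactSpace Ω]
  [TopologicalSpace.MetrizableSpace Ω] [MeasurableSpace Ω] [BorelSpace Ω]

lemma spair_sub (x : C(Ω, ℝ)) (ν₁ ν₂ : Measure Ω) [IsFiniteMeasure ν₁] [IsFiniteMeasure ν₂] :
    spair x (ν₁.toSignedMeasure - ν₂.toSignedMeasure) = ∫ ω, x ω ∂ν₁ - ∫ ω, x ω ∂ν₂ := by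
  set s : SignedMeasure Ω := ν₁.toSignedMeasure - ν₂.toSignedMeasure with hs
  have h1 : s.toJordanDecomposition.toSignedMeasure = s :=
    SignedMeasure.toSignedMeasure_toJordanDecomposition s
  have h2 : s.toJordanDecomposition.posPart + ν₂ = ν₁ + s.toJordanDecomposition.negPart := by
    rw [← Measure.toSignedMeasure_eq_toSignedMeasure_iff, Measure.toSignedMeasure_add,
      Measure.toSignedMeasure_add]
    unfold JordanDecomposition.toSignedMeasure at h1
    exact sub_eq_sub_iff_add_eq_add.1 (h1.trans hs)
  have h3 : ∫ ω, x ω ∂(s.toJordanDecomposition.posPart + ν₂) =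
      ∫ ω, x ω ∂(ν₁ + s.toJordanDecomposition.negPart) := by rw [h2]
  rw [integral_add_measure (cont_int _ x) (cont_int _ x),
    integral_add_measure (cont_int _ x) (cont_int _ x)] at h3
  unfold spair
  linarith

lemma sm_decomp (μ : SignedMeasure Ω) : μ = μ.toJordanDecomposition.posPart.toSignedMeasure -
    μ.toJordanDecomposition.negPart.toSignedMeasure :=
  (SignedMeasure.toSignedMeasure_toJordanDecomposition μ).symm

lemma spair_add (x : C(Ω, ℝ)) (μ ν : SignedMeasure Ω) :
    spair x (μ + ν) = spair x μ + spair x ν := by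
  have h : μ + ν = (μ.toJordanDecomposition.posPart +
        ν.toJordanDecomposition.posPart).toSignedMeasure -
      (μ.toJordanDecomposition.negPart + ν.toJordanDecomposition.negPart).toSignedMeasure := by
    rw [Measure.toSignedMeasure_add, Measure.toSignedMeasure_add]
    conv_lhs => rw [sm_decomp μ, sm_decomp ν]
    abel
  rw [h, spair_sub, integral_add_measure (cont_int _ x) (cont_int _ x),
    integral_add_measure (cont_int _ x) (cont_int _ x)]
  unfold spair
  ring

lemma spair_smul (x : C(Ω, ℝ)) (a : ℝ) (ha : 0 ≤ a) (μ : SignedMeasure Ω) :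
    spair x (a • μ) = a * spair x μ := by
  lift a to NNReal using ha
  have h : (a : ℝ) • μ = (a • μ.toJordanDecomposition.posPart).toSignedMeasure -
      (a • μ.toJordanDecomposition.negPart).toSignedMeasure := by
    rw [Measure.toSignedMeasure_smul, Measure.toSignedMeasure_smul]
    conv_lhs => rw [sm_decomp μ]
    ext i hi
    simp only [VectorMeasure.smul_apply, sub_apply, NNReal.smul_def, smul_eq_mul, mul_sub]
  rw [h, spair_sub, integral_smul_nnreal_measure, integral_smul_nnreal_measure]
  unfold spair
  simp only [NNReal.smul_def, smul_eq_mul]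
  ring

lemma spair_Vop (φ : Ω → Ω) (hφ : Continuous φ) (x : C(Ω, ℝ)) (μ : SignedMeasure Ω) :
    spair x (Vop φ μ) = spair (x.comp ⟨φ, hφ⟩) μ := by
  have h : Vop φ μ = (μ.toJordanDecomposition.posPart.map φ).toSignedMeasure -
      (μ.toJordanDecomposition.negPart.map φ).toSignedMeasure := by
    ext i hi
    unfold Vop
    rw [VectorMeasure.map_apply _ hφ.measurable hi]
    conv_lhs => rw [sm_decomp μ]
    rw [_root_.sub_apply, _root_.sub_apply,
      Measure.toSignedMeasure_apply_measurable (hφ.measurable hi),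
      Measure.toSignedMeasure_apply_measurable (hφ.measurable hi),
      Measure.toSignedMeasure_apply_measurable hi, Measure.toSignedMeasure_apply_measurable hi,
      map_measureReal_apply hφ.measurable hi, map_measureReal_apply hφ.measurable hi]
  rw [h, spair_sub, integral_map hφ.measurable.aemeasurable x.continuous.aestronglyMeasurable,
    integral_map hφ.measurable.aemeasurable x.continuous.aestronglyMeasurable]
  rfl

lemma spair_iter (φ : Ω → Ω) (hφ : Continuous φ) (n : ℕ) (x : C(Ω, ℝ)) (μ : SignedMeasure Ω) :
    spair x ((Vop φ)^[n] μ) = spair (fun ω => x (φ^[n] ω)) μ := by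
  induction n generalizing x with
  | zero => rfl
  | succ n ih =>
    rw [Function.iterate_succ_apply', spair_Vop φ hφ, ih]
    congr 1
    funext ω
    simp [Function.iterate_succ_apply']

/-- The function dual to a finite convex combination of iterates. -/
noncomputable def yfun (φ : Ω → Ω) (hφ : Continuous φ) (w : ℕ →₀ ℝ) (x : C(Ω, ℝ)) : C(Ω, ℝ) :=
  ∑ n ∈ w.support, w n • x.comp ⟨φ^[n], hφ.iterate n⟩

lemma yfun_apply (φ : Ω → Ω) (hφ : Continuous φ) (w : ℕ →₀ ℝ) (x : C(Ω, ℝ)) (ω : Ω) :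
    yfun φ hφ w x ω = ∑ n ∈ w.support, w n * x (φ^[n] ω) := by
  simp [yfun, ContinuousMap.sum_apply]

lemma spair_yfun (φ : Ω → Ω) (hφ : Continuous φ) (w : ℕ →₀ ℝ) (x : C(Ω, ℝ))
    (μ : SignedMeasure Ω) :
    spair (yfun φ hφ w x) μ = w.sum fun n a => a * spair (fun ω => x (φ^[n] ω)) μ := by
  have key : ∀ (ν : Measure Ω) [IsFiniteMeasure ν], ∫ ω, yfun φ hφ w x ω ∂ν =
      ∑ n ∈ w.support, w n * ∫ ω, x (φ^[n] ω) ∂ν := by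
    intro ν _
    simp only [yfun_apply]
    rw [integral_finsetSum]
    · simp only [integral_const_mul]
    · intro n _
      exact (cont_int ν (x.comp ⟨φ^[n], hφ.iterate n⟩)).const_mul _
  unfold spair Finsupp.sum
  rw [key, key, ← Finset.sum_sub_distrib]
  simp only [mul_sub]

lemma hull_rep (φ : Ω → Ω) (hφ : Continuous φ) (T : SignedMeasure Ω → SignedMeasure Ω)
    (hT : T ∈ convexHull ℝ (Set.range fun n : ℕ => (Vop φ)^[n])) :
    ∃ w : ℕ →₀ ℝ, (∀ n, 0 ≤ w n) ∧ (w.sum fun _ a => a) = 1 ∧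
      ∀ (x : C(Ω, ℝ)) (μ : SignedMeasure Ω), spair x (T μ) = spair (yfun φ hφ w x) μ := by
  simp only [spair_yfun]
  revert T
  change convexHull ℝ (Set.range fun n : ℕ => (Vop φ)^[n]) ⊆ {T | _}
  refine convexHull_min ?_ ?_
  · rintro _ ⟨n, rfl⟩
    refine ⟨Finsupp.single n 1, fun k => ?_, ?_, fun x μ => ?_⟩
    · rw [Finsupp.single_apply]; split_ifs <;> norm_num
    · simp
    · rw [Finsupp.sum_single_index (by simp), one_mul]
      exact spair_iter φ hφ n x μ
  · rintro T₁ ⟨w₁, h1, h2, h3⟩ T₂ ⟨w₂, g1, g2, g3⟩ a b ha hb hab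
    refine ⟨a • w₁ + b • w₂, fun k => ?_, ?_, fun x μ => ?_⟩
    · have := h1 k
      have := g1 k
      simp only [Finsupp.add_apply, Finsupp.smul_apply, smul_eq_mul]
      positivity
    · rw [Finsupp.sum_add_index' (by simp) (by simp), Finsupp.sum_smul_index (by simp),
        Finsupp.sum_smul_index (by simp), ← Finsupp.mul_sum, ← Finsupp.mul_sum, h2, g2]
      linarith
    · change spair x (a • T₁ μ + b • T₂ μ) = _
      rw [spair_add, spair_smul x a ha, spair_smul x b hb, h3, g3,
        Finsupp.sum_add_index' (by simp) (by intros; ring), Finsupp.sum_smul_index (by simp),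
        Finsupp.sum_smul_index (by simp), Finsupp.mul_sum, Finsupp.mul_sum]
      simp only [mul_assoc]

lemma spair_dirac (x : C(Ω, ℝ)) (ω : Ω) : spair x (diracSM ω) = x ω := by
  have h : diracSM ω = (Measure.dirac ω).toSignedMeasure - (0 : Measure Ω).toSignedMeasure := by
    simp [diracSM]
  rw [h, spair_sub]
  simp

lemma yfun_bound (φ : Ω → Ω) (hφ : Continuous φ) (w : ℕ →₀ ℝ) (hw : ∀ n, 0 ≤ w n)
    (h1 : (w.sum fun _ a => a) = 1) (x : C(Ω, ℝ)) (ω : Ω) (c ε : ℝ)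
    (h : ∀ n, |x (φ^[n] ω) - c| ≤ ε) : |yfun φ hφ w x ω - c| ≤ ε := by
  have e : yfun φ hφ w x ω - c = ∑ n ∈ w.support, w n * (x (φ^[n] ω) - c) := by
    rw [yfun_apply]
    simp only [mul_sub, Finset.sum_sub_distrib, ← Finset.sum_mul]
    rw [show ∑ n ∈ w.support, w n = 1 from h1, one_mul]
  rw [e]
  calc _ ≤ ∑ n ∈ w.support, |w n * (x (φ^[n] ω) - c)| := Finset.abs_sum_le_sum_abs _ _
    _ ≤ ∑ n ∈ w.support, w n * ε := by
        refine Finset.sum_le_sum fun n _ => ?_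
        rw [abs_mul, abs_of_nonneg (hw n)]
        exact mul_le_mul_of_nonneg_left (h n) (hw n)
    _ = ε := by
        rw [← Finset.sum_mul, show ∑ n ∈ w.support, w n = 1 from h1, one_mul]

lemma yfun_avg (φ : Ω → Ω) (hφ : Continuous φ) (w : ℕ →₀ ℝ) (x g : C(Ω, ℝ)) (N : ℕ)
    (hg : ∀ ω, g ω = birkhoffAverage ℝ φ x N ω) (ω : Ω) :
    birkhoffAverage ℝ φ (yfun φ hφ w x) N ω = yfun φ hφ w g ω := by
  rw [yfun_apply]
  simp only [hg, birkhoffAverage, birkhoffSum, yfun_apply, smul_eq_mul]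
  simp only [Finset.mul_sum]
  rw [Finset.sum_comm]
  refine Finset.sum_congr rfl fun n _ => Finset.sum_congr rfl fun k _ => ?_
  rw [← Function.iterate_add_apply, ← Function.iterate_add_apply, add_comm n k]
  ring

lemma yfun_tendsto (φ : Ω → Ω) (hφ : Continuous φ) (htame : Tame φ hφ)
    (hmin : ∀ ω : Ω, ∃! m : Set Ω, IsMinimalSet φ m ∧ m ⊆ orbitClosure φ ω)
    (w : ℕ → ℕ →₀ ℝ) (hw : ∀ k n, 0 ≤ w k n) (h1 : ∀ k, ((w k).sum fun _ a => a) = 1)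
    (x : C(Ω, ℝ))
    (herg : ∀ ω, Tendsto (fun k => yfun φ hφ (w k) x ω - yfun φ hφ (w k) x (φ ω)) atTop (𝓝 0))
    (ω : Ω) : ∃ c, Tendsto (fun k => yfun φ hφ (w k) x ω) atTop (𝓝 c) := by
  obtain ⟨c, hc⟩ := ue_orbit φ hφ htame hmin x ω
  refine ⟨c, ?_⟩
  have hi : ∀ i : ℕ, Tendsto (fun k => yfun φ hφ (w k) x ω - yfun φ hφ (w k) x (φ^[i] ω))
      atTop (𝓝 0) := by
    intro i
    induction i with
    | zero => simp
    | succ i ih =>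
      have := ih.add (herg (φ^[i] ω))
      simp only [sub_add_sub_cancel, add_zero] at this
      simpa only [Function.iterate_succ_apply'] using this
  rw [Metric.tendsto_atTop]
  intro ε hε
  obtain ⟨N, hN, hN0⟩ := ((hc (ε / 3) (by positivity)).and (eventually_ge_atTop 1)).exists
  let g : C(Ω, ℝ) := ⟨birkhoffAverage ℝ φ x N, bAvg_cont φ hφ x N⟩
  have hb : ∀ k, |birkhoffAverage ℝ φ (yfun φ hφ (w k) x) N ω - c| ≤ ε / 3 := by
    intro k
    rw [yfun_avg φ hφ (w k) x g N (fun _ => rfl)]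
    exact yfun_bound φ hφ _ (hw k) (h1 k) g ω c _ fun n =>
      hN _ ((orbitClosure_mapsTo φ hφ ω).iterate n (self_mem_orbitClosure φ ω))
  have ht : Tendsto (fun k => yfun φ hφ (w k) x ω -
      birkhoffAverage ℝ φ (yfun φ hφ (w k) x) N ω) atTop (𝓝 0) := by
    have hs := (tendsto_finsetSum (Finset.range N) fun i _ => hi i).const_mul ((N : ℝ)⁻¹)
    simp only [Finset.sum_const_zero, mul_zero] at hs
    refine hs.congr fun k => ?_
    have : (N : ℝ) ≠ 0 := by positivity
    simp only [birkhoffAverage, birkhoffSum, smul_eq_mul, Finset.sum_sub_distrib,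
      Finset.sum_const, Finset.card_range, nsmul_eq_mul]
    field_simp
  obtain ⟨K, hK⟩ := (Metric.tendsto_atTop.1 ht) (ε / 3) (by positivity)
  refine ⟨K, fun k hk => ?_⟩
  have a1 := hK k hk
  have a2 := hb k
  rw [Real.dist_eq, sub_zero] at a1
  rw [Real.dist_eq]
  have := abs_sub_le (yfun φ hφ (w k) x ω) (birkhoffAverage ℝ φ (yfun φ hφ (w k) x) N ω) c
  linarith

lemma part_one (φ : Ω → Ω) (hφ : Continuous φ) (htame : Tame φ hφ)
    (hmin : ∀ ω : Ω, ∃! m : Set Ω, IsMinimalSet φ m ∧ m ⊆ orbitClosure φ ω)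
    (T : ℕ → SignedMeasure Ω → SignedMeasure Ω)
    (hT : ∀ k, T k ∈ convexHull ℝ (Set.range fun n : ℕ => (Vop φ)^[n]))
    (herg : ∀ (x : C(Ω, ℝ)) (μ : SignedMeasure Ω),
      Tendsto (fun k => spair (⇑x) (T k μ) - spair (⇑x) (T k (Vop φ μ))) atTop (𝓝 0)) :
    ∃ S : SignedMeasure Ω → SignedMeasure Ω, ∀ (x : C(Ω, ℝ)) (μ : SignedMeasure Ω),
      Tendsto (fun k => spair (⇑x) (T k μ)) atTop (𝓝 (spair (⇑x) (S μ))) := by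
  choose w hw h1 hrep using fun k => hull_rep φ hφ (T k) (hT k)
  have hpt : ∀ (x : C(Ω, ℝ)) (ω : Ω), ∃ c, Tendsto (fun k => yfun φ hφ (w k) x ω) atTop (𝓝 c) := by
    intro x ω
    refine yfun_tendsto φ hφ htame hmin w hw h1 x (fun ω => ?_) ω
    refine (herg x (diracSM ω)).congr fun k => ?_
    rw [hrep, hrep, spair_Vop φ hφ, spair_dirac, spair_dirac]
    rfl
  have hdual : ∀ (ν : Measure Ω) [IsFiniteMeasure ν], ∃ ν' : Measure Ω, IsFiniteMeasure ν' ∧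
      ∀ x : C(Ω, ℝ), Tendsto (fun k => ∫ ω, yfun φ hφ (w k) x ω ∂ν) atTop
        (𝓝 (∫ ω, x ω ∂ν')) := by
    intro ν _
    let L : ℕ → C(Ω, ℝ) →ₗ[ℝ] ℝ := fun k =>
      { toFun := fun x => ∫ ω, yfun φ hφ (w k) x ω ∂ν
        map_add' := fun x y => by
          rw [← integral_add (cont_int ν _) (cont_int ν _)]
          congr 1
          funext ω
          simp only [yfun_apply, ContinuousMap.add_apply, mul_add, Finset.sum_add_distrib]
        map_smul' := fun a x => by
          rw [RingHom.id_apply, smul_eq_mul, ← integral_const_mul]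
          congr 1
          funext ω
          simp only [yfun_apply, ContinuousMap.smul_apply, smul_eq_mul, Finset.mul_sum]
          exact Finset.sum_congr rfl fun n _ => by ring }
    refine rmk_lim atTop L ?_ ?_
    · intro k f hf
      refine integral_nonneg fun ω => ?_
      change 0 ≤ yfun φ hφ (w k) f ω
      rw [yfun_apply]
      exact Finset.sum_nonneg fun n _ => mul_nonneg (hw k n) (hf _)
    · intro x
      choose c hc using hpt x
      refine ⟨∫ ω, c ω ∂ν, ?_⟩
      refine tendsto_integral_of_dominated_convergence (fun _ => ‖x‖)
        (fun k => (yfun φ hφ (w k) x).continuous.aestronglyMeasurable) (integrable_const _)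
        (fun k => Eventually.of_forall fun ω => ?_) (Eventually.of_forall hc)
      have := yfun_bound φ hφ (w k) (hw k) (h1 k) x ω 0 ‖x‖ (fun n => by
        rw [sub_zero]; exact x.norm_coe_le_norm _)
      rwa [sub_zero] at this
  choose P hPf hP using fun μ : SignedMeasure Ω => hdual μ.toJordanDecomposition.posPart
  choose Q hQf hQ using fun μ : SignedMeasure Ω => hdual μ.toJordanDecomposition.negPart
  refine ⟨fun μ => (P μ).toSignedMeasure - (Q μ).toSignedMeasure, fun x μ => ?_⟩
  rw [spair_sub]
  refine ((hP μ x).sub (hQ μ x)).congr fun k => ?_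
  rw [hrep]
  rfl

end SignedPairing

lemma part_two {Ω : Type*} [TopologicalSpace Ω] [CompactSpace Ω]
    [TopologicalSpace.MetrizableSpace Ω] [MeasurableSpace Ω] [BorelSpace Ω]
    (φ : Ω → Ω) (hφ : Continuous φ) (htame : Tame φ hφ)
    (hmin : ∀ ω : Ω, ∃! m : Set Ω, IsMinimalSet φ m ∧ m ⊆ orbitClosure φ ω)
    (μ : Measure Ω) (hμ : IsErgodicMeasure φ μ) : IsMinimalSet φ (msupp μ) := by
  letI : MetricSpace Ω := TopologicalSpace.metrizableSpaceMetric Ω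
  obtain ⟨hprob, hinv, herg⟩ := hμ
  have hmp : MeasurePreserving φ μ μ := by
    refine ⟨hφ.measurable, ?_⟩
    ext e he
    rw [Measure.map_apply hφ.measurable he, hinv e he]
  have hE : Ergodic φ μ := by
    refine { toMeasurePreserving := hmp, toPreErgodic := ⟨fun s hs hs' => ?_⟩ }
    rw [eventuallyConst_set']
    rcases herg s hs hs' with h | h
    · exact Or.inl (ae_eq_empty.2 h)
    · exact Or.inr (ae_eq_univ.2 ((prob_compl_eq_zero_iff hs).2 h))
  set Y := msupp μ with hY
  have hYc : IsClosed Y := isClosed_sInter fun s hs => hs.1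
  have hnull : μ Yᶜ = 0 := by
    refine measure_null_of_locally_null _ fun z hz => ?_
    have : ∃ s : Set Ω, (IsClosed s ∧ μ sᶜ = 0) ∧ z ∉ s := by
      by_contra! h
      exact hz (Set.mem_sInter.2 fun s hs => h s hs)
    obtain ⟨s, ⟨hs1, hs2⟩, hs3⟩ := this
    exact ⟨sᶜ, mem_nhdsWithin_of_mem_nhds (hs1.isOpen_compl.mem_nhds hs3), hs2⟩
  have hYsub : ∀ s : Set Ω, IsClosed s → μ sᶜ = 0 → Y ⊆ s := fun s h1 h2 =>
    Set.sInter_subset_of_mem ⟨h1, h2⟩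
  have hYi : Set.MapsTo φ Y Y := by
    refine hYsub (φ ⁻¹' Y) (hYc.preimage hφ) ?_
    rw [← Set.preimage_compl, hinv _ hYc.measurableSet.compl, hnull]
  have hYae : ∀ᵐ ω ∂μ, ω ∈ Y := hnull
  have hhit : ∀ᵐ ω ∂μ, ∀ O ∈ TopologicalSpace.countableBasis Ω, μ O ≠ 0 →
      ∃ n : ℕ, φ^[n] ω ∈ O := by
    rw [ae_ball_iff (TopologicalSpace.countable_countableBasis Ω)]
    intro O hO
    by_cases h0 : μ O = 0
    · exact Eventually.of_forall fun ω h => absurd h0 h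
    have hOo := TopologicalSpace.isOpen_of_mem_countableBasis hO
    have hB : IsOpen (⋃ n : ℕ, φ^[n] ⁻¹' O) :=
      isOpen_iUnion fun n => hOo.preimage (hφ.iterate n)
    have hsub : φ ⁻¹' (⋃ n : ℕ, φ^[n] ⁻¹' O) ⊆ ⋃ n : ℕ, φ^[n] ⁻¹' O := by
      intro ω hω
      obtain ⟨n, hn⟩ := Set.mem_iUnion.1 hω
      exact Set.mem_iUnion.2 ⟨n + 1, hn⟩
    rcases hE.ae_empty_or_univ_of_preimage_ae_le hB.measurableSet.nullMeasurableSet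
      (HasSubset.Subset.eventuallyLE hsub) with h | h
    · exfalso
      refine h0 (measure_mono_null ?_ (ae_eq_empty.1 h))
      exact fun ω hω => Set.mem_iUnion.2 ⟨0, hω⟩
    · filter_upwards [eventuallyEq_univ.1 h] with ω hω _
      exact Set.mem_iUnion.1 hω
  obtain ⟨ω, hωY, hω⟩ := (hYae.and hhit).exists
  have horb : orbitClosure φ ω = Y := by
    refine Set.Subset.antisymm (orbitClosure_subset φ ω Y hYc hYi hωY) ?_
    intro z hz
    unfold orbitClosure
    rw [(TopologicalSpace.isBasis_countableBasis Ω).mem_closure_iff]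
    intro O hO hzO
    have hOo := TopologicalSpace.isOpen_of_mem_countableBasis hO
    have hne : μ O ≠ 0 := by
      intro h0
      exact hYsub Oᶜ hOo.isClosed_compl (by rwa [compl_compl]) hz hzO
    obtain ⟨n, hn⟩ := hω O hO hne
    exact ⟨_, hn, n, rfl⟩
  obtain ⟨m, ⟨hm, hmY⟩, huniq⟩ := hmin ω
  rw [horb] at hmY huniq
  have hYm : ∀ z ∈ Y, m ⊆ orbitClosure φ z := by
    intro z hz
    obtain ⟨m', ⟨hm', hm'2⟩, -⟩ := hmin z
    rw [← huniq m' ⟨hm', hm'2.trans (orbitClosure_subset φ z _ hYc hYi hz)⟩]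
    exact hm'2
  let x : C(Ω, ℝ) := ⟨fun z => Metric.infDist z m, Metric.continuous_infDist_pt m⟩
  have hup := ue_upper φ hφ htame x Y hYc ⟨ω, hωY⟩ hYi m hm.1 hm.2.2.1 hYm 0
    (fun ε hε => Eventually.of_forall fun N z hz => by
      have h0 : birkhoffAverage ℝ φ x N z = 0 := by
        unfold birkhoffAverage birkhoffSum
        rw [Finset.sum_eq_zero, smul_zero]
        exact fun n _ => Metric.infDist_zero_of_mem (hm.2.2.1.iterate n hz)
      rw [h0]
      linarith)
  have havg : ∀ N : ℕ, 1 ≤ N → ∫ z, birkhoffAverage ℝ φ x N z ∂μ = ∫ z, x z ∂μ := by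
    intro N hN
    have hN0 : (N : ℝ) ≠ 0 := by positivity
    have hit : ∀ n : ℕ, ∫ z, x (φ^[n] z) ∂μ = ∫ z, x z ∂μ := by
      intro n
      have h1 := (hmp.iterate n).map_eq
      conv_rhs => rw [← h1]
      rw [integral_map (hφ.iterate n).measurable.aemeasurable
        x.continuous.aestronglyMeasurable]
    simp only [birkhoffAverage, birkhoffSum, smul_eq_mul]
    rw [integral_const_mul, integral_finsetSum]
    · simp only [hit, Finset.sum_const, Finset.card_range, nsmul_eq_mul]
      field_simp
    · intro n _
      exact cont_int μ (x.comp ⟨φ^[n], hφ.iterate n⟩)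
  have hle : ∫ z, x z ∂μ ≤ 0 := by
    refine le_of_forall_pos_le_add fun ε hε => ?_
    obtain ⟨N, hN, hN1⟩ := ((hup ε hε).and (eventually_ge_atTop 1)).exists
    rw [← havg N hN1]
    have := integral_mono_ae (cont_int μ ⟨birkhoffAverage ℝ φ x N, bAvg_cont φ hφ x N⟩)
      (integrable_const (0 + ε)) (hYae.mono fun z hz => hN z hz)
    simpa using this
  have hnn : 0 ≤ᵐ[μ] (x : Ω → ℝ) := Eventually.of_forall fun z => Metric.infDist_nonneg
  have hz : (x : Ω → ℝ) =ᵐ[μ] 0 := (integral_eq_zero_iff_of_nonneg_ae hnn (cont_int μ x)).1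
    (le_antisymm hle (integral_nonneg_of_ae hnn))
  have hYsm : Y ⊆ m := by
    refine hYsub m hm.2.1 ?_
    have : ∀ᵐ z ∂μ, z ∈ m := by
      filter_upwards [hz] with z hz
      exact (hm.2.1.mem_iff_infDist_zero hm.1).2 hz
    exact this
  rw [Set.Subset.antisymm hYsm hmY]
  exact hm

end ErgAux

variable {Ω : Type*} [TopologicalSpace Ω] [CompactSpace Ω] [TopologicalSpace.MetrizableSpace Ω]
  [Nonempty Ω] [MeasurableSpace Ω] [BorelSpace Ω]

/-- Theorem 3.6: for a tame semicascade in which every orbit closure contains exactly one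
minimal set, all ergodic operator sequences converge in the weak* operator topology and the
support of every `φ`-ergodic measure is a minimal set. -/
theorem stmt_16 (φ : Ω → Ω) (hφ : Continuous φ) (htame : Tame φ hφ)
    (hmin : ∀ ω : Ω, ∃! m : Set Ω, IsMinimalSet φ m ∧ m ⊆ orbitClosure φ ω) :
    (∀ T : ℕ → SignedMeasure Ω → SignedMeasure Ω,
      (∀ k, T k ∈ convexHull ℝ (Set.range fun n : ℕ => (Vop φ)^[n])) →
      (∀ (x : C(Ω, ℝ)) (μ : SignedMeasure Ω),
        Tendsto (fun k => spair (⇑x) (T k μ) - spair (⇑x) (T k (Vop φ μ))) atTop (𝓝 0)) →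
      ∃ S : SignedMeasure Ω → SignedMeasure Ω, ∀ (x : C(Ω, ℝ)) (μ : SignedMeasure Ω),
        Tendsto (fun k => spair (⇑x) (T k μ)) atTop (𝓝 (spair (⇑x) (S μ)))) ∧
    (∀ μ : Measure Ω, IsErgodicMeasure φ μ → IsMinimalSet φ (msupp μ)) := by
  exact ⟨ErgAux.part_one φ hφ htame hmin, ErgAux.part_two φ hφ htame hmin⟩
end
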